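/- Under the Pólya urn hypotheses, let p ≥ 2 and assume sup_n ‖X_{n+1} − X_n‖_p < ∞. List the eigenvalues λ₁, …, λ_q of A with algebraic multiplicity, ordered so that Re λ₁ ≥ Re λ₂ ≥ … and, among eigenvalues of equal real part, by decreasing ν_λ; assume λ₁ = b. Then there is a constant C (depending on the data and p but not on n) such that for every n ≥ 2: ‖X_n − E X_n‖_p ≤ C n^{1/2} if Re λ₂ < b/2; ‖X_n − E X_n‖_p ≤ C n^{1/2} (log n)^{ν_{λ₂} + 1/2} if Re λ₂ = b/2; and ‖X_n − E X_n‖_p ≤ C n^{Re λ₂ / b} (log n)^{ν_{λ₂}} if Re λ₂ > b/2. -/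

import Mathlib

open MeasureTheory Matrix Filter

/-- `P` is the spectral projection of `A` for the eigenvalue `lam`: it is the identity
on the generalized eigenspace E_lam = ker((A − lam I)^q) and vanishes on the generalized
eigenspace E_mu = ker((A − mu I)^q) of every other eigenvalue `mu`. Since ℂ^q is the
direct sum of the generalized eigenspaces, these conditions determine `P` uniquely. -/
def IsSpectralProj {q : ℕ} (A : Matrix (Fin q) (Fin q) ℂ) (lam : ℂ)
    (P : Matrix (Fin q) (Fin q) ℂ) : Prop :=
  (∀ v : Fin q → ℂ, ((A - lam • 1) ^ q).mulVec v = 0 → P.mulVec v = v) ∧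
  ∀ mu : ℂ, mu ≠ lam → ∀ v : Fin q → ℂ, ((A - mu • 1) ^ q).mulVec v = 0 → P.mulVec v = 0

/-- `ν` is the nilpotency index ν_lam of N_lam := (A − lam I) P_lam, i.e. the unique
integer ν ≥ 0 with N_lam^(ν+1) = 0 and (ν = 0 or N_lam^ν ≠ 0). -/
def NilIndexOf {q : ℕ} (A : Matrix (Fin q) (Fin q) ℂ) (lam : ℂ)
    (P : Matrix (Fin q) (Fin q) ℂ) (ν : ℕ) : Prop :=
  ((A - lam • 1) * P) ^ (ν + 1) = 0 ∧ (ν = 0 ∨ ((A - lam • 1) * P) ^ ν ≠ 0)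

/-- `mu` is a candidate for the second eigenvalue λ₂ in the ordered listing
λ₁, λ₂, …, λ_q of the eigenvalues of `Ac` with algebraic multiplicity (λ₁ = b being
first): either `mu` is an eigenvalue different from b, or `mu = b` and b occurs with
algebraic multiplicity at least 2. -/
def MemSecondEigSet {q : ℕ} (Ac : Matrix (Fin q) (Fin q) ℂ) (b : ℝ) (mu : ℂ) : Prop :=
  (mu ≠ (b : ℂ) ∧ mu ∈ spectrum ℂ Ac) ∨
  (mu = (b : ℂ) ∧ 2 ≤ Polynomial.rootMultiplicity (b : ℂ) (Matrix.charpoly Ac))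


/-- Pointwise second-order inequality. -/
theorem urn_pt_ineq {E : Type*} [NormedAddCommGroup E] [InnerProductSpace ℝ E]
    (p : ℝ) (hp : 2 ≤ p) : ∃ C : ℝ, 1 ≤ C ∧ ∀ x y : E,
      ‖x + y‖ ^ p ≤ ‖x‖ ^ p + p * (‖x‖ ^ (p - 2) * inner ℝ x y)
        + C * (‖x‖ ^ (p - 2) * ‖y‖ ^ 2 + ‖y‖ ^ p) := by
  set K : ℝ := 3 * p / 2 with hK
  have hKpos : 0 < K := by positivity
  refine ⟨(1 + K) ^ p + p * (K ^ (p - 2) * K) + 9 * p ^ 2 + p, ?_, ?_⟩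
  · have : 0 ≤ (1 + K) ^ p := by positivity
    have : 0 ≤ p * (K ^ (p - 2) * K) := by positivity
    nlinarith
  intro x y
  set C := (1 + K) ^ p + p * (K ^ (p - 2) * K) + 9 * p ^ 2 + p with hC
  have hin : |inner ℝ x y| ≤ ‖x‖ * ‖y‖ := abs_real_inner_le_norm x y
  have hin1 := (abs_le.1 hin).1
  have hin2 := (abs_le.1 hin).2
  rcases le_or_gt ‖x‖ (K * ‖y‖) with h | h
  · rcases eq_or_lt_of_le (norm_nonneg y) with hy | hy
    · have hx : ‖x‖ = 0 := le_antisymm (by rw [← hy] at h; simpa using h) (norm_nonneg _)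
      have hx' : x = 0 := norm_eq_zero.1 hx
      have hy' : y = 0 := norm_eq_zero.1 hy.symm
      subst hx' hy'
      simp [Real.zero_rpow (by linarith : p ≠ 0)]
    · have h1 : ‖x + y‖ ^ p ≤ (1 + K) ^ p * ‖y‖ ^ p := by
        rw [← Real.mul_rpow (by positivity) hy.le]
        apply Real.rpow_le_rpow (norm_nonneg _) _ (by linarith)
        have := norm_add_le x y
        linarith
      have h2 : ‖x‖ ^ (p - 2) * (‖x‖ * ‖y‖) ≤ (K ^ (p - 2) * K) * ‖y‖ ^ p := by
        have e1 : ‖x‖ ^ (p - 2) ≤ (K * ‖y‖) ^ (p - 2) :=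
          Real.rpow_le_rpow (norm_nonneg _) h (by linarith)
        have e2 : ‖y‖ ^ p = ‖y‖ ^ (p - 2) * (‖y‖ * ‖y‖) := by
          rw [← pow_two, ← Real.rpow_natCast, ← Real.rpow_add hy]; norm_num
        rw [Real.mul_rpow hKpos.le hy.le] at e1
        rw [e2]
        calc ‖x‖ ^ (p - 2) * (‖x‖ * ‖y‖) ≤ (K ^ (p - 2) * ‖y‖ ^ (p - 2)) * ((K * ‖y‖) * ‖y‖) := by
              gcongr
          _ = _ := by ring
      have h3 : -(‖x‖ ^ (p - 2) * (‖x‖ * ‖y‖)) ≤ ‖x‖ ^ (p - 2) * inner ℝ x y := by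
        have : 0 ≤ ‖x‖ ^ (p - 2) := by positivity
        nlinarith
      have h4 : 0 ≤ ‖x‖ ^ p := by positivity
      have h5 : 0 ≤ ‖y‖ ^ p := by positivity
      have h6 : 0 ≤ ‖x‖ ^ (p - 2) * ‖y‖ ^ 2 := by positivity
      have h7 : 0 ≤ C := by positivity
      have h8 : p * (‖x‖ ^ (p - 2) * (‖x‖ * ‖y‖)) ≤ p * ((K ^ (p - 2) * K) * ‖y‖ ^ p) := by gcongr
      have h9 : p * -(‖x‖ ^ (p - 2) * (‖x‖ * ‖y‖)) ≤ p * (‖x‖ ^ (p - 2) * inner ℝ x y) := by gcongr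
      have h10 : 0 ≤ C * (‖x‖ ^ (p - 2) * ‖y‖ ^ 2) := by positivity
      have h11 : C * ‖y‖ ^ p = (1 + K) ^ p * ‖y‖ ^ p + p * ((K ^ (p - 2) * K) * ‖y‖ ^ p)
          + (9 * p ^ 2 + p) * ‖y‖ ^ p := by rw [hC]; ring
      have h12 : 0 ≤ (9 * p ^ 2 + p) * ‖y‖ ^ p := by positivity
      linarith
  · have hx : 0 < ‖x‖ := lt_of_le_of_lt (by positivity) h
    set t : ℝ := (2 * inner ℝ x y + ‖y‖ ^ 2) / ‖x‖ ^ 2 with ht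
    have hyx : ‖y‖ ≤ ‖x‖ := by
      have : ‖y‖ ≤ K * ‖y‖ := by
        have : 1 ≤ K := by rw [hK]; linarith
        nlinarith [norm_nonneg y]
      linarith
    have hx2 : 0 < ‖x‖ ^ 2 := by positivity
    have hsq : ‖x + y‖ ^ 2 = ‖x‖ ^ 2 * (1 + t) := by
      rw [ht, norm_add_sq_real]; field_simp
      ring
    have h1t : 0 ≤ 1 + t := by
      by_contra hneg
      have : ‖x‖ ^ 2 * (1 + t) < 0 := mul_neg_of_pos_of_neg hx2 (by linarith)
      nlinarith [sq_nonneg ‖x + y‖]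
    have htabs : |t| ≤ 3 * ‖y‖ / ‖x‖ := by
      rw [ht, abs_div, abs_of_pos hx2, div_le_div_iff₀ hx2 hx]
      have e : |2 * inner ℝ x y + ‖y‖ ^ 2| ≤ 3 * ‖y‖ * ‖x‖ := by
        rw [abs_le]
        constructor <;> nlinarith [norm_nonneg y]
      nlinarith
    have hpt : |p / 2 * t| ≤ 1 := by
      rw [abs_mul, abs_of_pos (by linarith : 0 < p / 2)]
      calc p / 2 * |t| ≤ p / 2 * (3 * ‖y‖ / ‖x‖) := by gcongr
        _ = K * ‖y‖ / ‖x‖ := by rw [hK]; ring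
        _ ≤ 1 := by rw [div_le_one hx]; exact h.le
    have hexp : (1 + t) ^ (p / 2) ≤ 1 + p / 2 * t + (p / 2 * t) ^ 2 := by
      have e1 : (1 + t) ^ (p / 2) ≤ Real.exp (p / 2 * t) := by
        calc (1 + t) ^ (p / 2) ≤ (Real.exp t) ^ (p / 2) := by
              apply Real.rpow_le_rpow h1t _ (by linarith)
              linarith [Real.add_one_le_exp t]
          _ = _ := by rw [← Real.exp_mul]; ring_nf
      have := (abs_le.1 (Real.abs_exp_sub_one_sub_id_le hpt)).2
      linarith
    have hpow : ‖x + y‖ ^ p = ‖x‖ ^ p * (1 + t) ^ (p / 2) := by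
      have e : ∀ z : E, ‖z‖ ^ p = (‖z‖ ^ 2) ^ (p / 2) := by
        intro z
        rw [← Real.rpow_natCast, ← Real.rpow_mul (norm_nonneg _)]
        congr 1; push_cast; ring
      rw [e (x + y), e x, hsq, Real.mul_rpow hx2.le h1t]
    have hsplit : ‖x‖ ^ p = ‖x‖ ^ (p - 2) * ‖x‖ ^ 2 := by
      rw [← Real.rpow_natCast, ← Real.rpow_add hx]; norm_num
    have ht2 : (p / 2 * t) ^ 2 * ‖x‖ ^ 2 ≤ 9 * p ^ 2 * ‖y‖ ^ 2 := by
      have e1 : |t| * ‖x‖ ≤ 3 * ‖y‖ := by rwa [le_div_iff₀ hx] at htabs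
      have e2 : (|t| * ‖x‖) ^ 2 ≤ (3 * ‖y‖) ^ 2 := by gcongr
      rw [mul_pow, sq_abs] at e2
      have e3 : p ^ 2 * (t ^ 2 * ‖x‖ ^ 2) ≤ p ^ 2 * (3 * ‖y‖) ^ 2 := by gcongr
      nlinarith [mul_nonneg (sq_nonneg p) (sq_nonneg ‖y‖)]
    have htx : t * ‖x‖ ^ 2 = 2 * inner ℝ x y + ‖y‖ ^ 2 := by rw [ht]; field_simp
    have hx0 : 0 ≤ ‖x‖ ^ (p - 2) := by positivity
    have hCC : 9 * p ^ 2 + p / 2 ≤ C := by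
      have : 0 ≤ (1 + K) ^ p + p * (K ^ (p - 2) * K) := by positivity
      rw [hC]; linarith
    have hCpos : 0 ≤ C := by positivity
    calc ‖x + y‖ ^ p ≤ ‖x‖ ^ p * (1 + p / 2 * t + (p / 2 * t) ^ 2) := by
          rw [hpow]; gcongr
      _ = ‖x‖ ^ p + p / 2 * ‖x‖ ^ (p - 2) * (t * ‖x‖ ^ 2)
          + ‖x‖ ^ (p - 2) * ((p / 2 * t) ^ 2 * ‖x‖ ^ 2) := by rw [hsplit]; ring
      _ ≤ ‖x‖ ^ p + p / 2 * ‖x‖ ^ (p - 2) * (2 * inner ℝ x y + ‖y‖ ^ 2)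
          + ‖x‖ ^ (p - 2) * (9 * p ^ 2 * ‖y‖ ^ 2) := by rw [htx]; gcongr
      _ = ‖x‖ ^ p + p * (‖x‖ ^ (p - 2) * inner ℝ x y)
          + (9 * p ^ 2 + p / 2) * (‖x‖ ^ (p - 2) * ‖y‖ ^ 2) := by ring
      _ ≤ ‖x‖ ^ p + p * (‖x‖ ^ (p - 2) * inner ℝ x y)
          + C * (‖x‖ ^ (p - 2) * ‖y‖ ^ 2 + ‖y‖ ^ p) := by
          have e1 : (9 * p ^ 2 + p / 2) * (‖x‖ ^ (p - 2) * ‖y‖ ^ 2)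
            ≤ C * (‖x‖ ^ (p - 2) * ‖y‖ ^ 2) := by gcongr
          have e2 : 0 ≤ C * ‖y‖ ^ p := by positivity
          linarith

theorem urn_mul_le_max (p : ℝ) (hp : 2 ≤ p) (x y : ℝ) (hx : 0 ≤ x) (hy : 0 ≤ y) :
    x ^ (p - 2) * y ^ 2 ≤ x ^ p + y ^ p := by
  have key : ∀ z : ℝ, 0 ≤ z → z ^ (p - 2) * z ^ 2 = z ^ p := by
    intro z hz
    rcases eq_or_lt_of_le hz with h | h
    · rw [← h]; simp [Real.zero_rpow (by linarith : p ≠ 0)]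
    · rw [← Real.rpow_natCast, ← Real.rpow_add h]; norm_num
  have hxp : 0 ≤ x ^ p := by positivity
  have hyp : 0 ≤ y ^ p := by positivity
  rcases le_total x y with h | h
  · have : x ^ (p - 2) * y ^ 2 ≤ y ^ (p - 2) * y ^ 2 := by
      gcongr
    rw [key y hy] at this; linarith
  · have : x ^ (p - 2) * y ^ 2 ≤ x ^ (p - 2) * x ^ 2 := by gcongr
    rw [key x hx] at this; linarith

theorem urn_scalar (p : ℝ) (hp : 2 ≤ p) (C s d : ℝ) (hC : 1 ≤ C) (hs : 0 < s) (hd : 0 < d) :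
    s ^ p + C * (2 * (s ^ (p - 2) * d ^ 2) + d ^ p) ≤ ((s ^ 2 + 3 * C * d ^ 2) ^ (1 / 2 : ℝ)) ^ p := by
  have hr : 1 ≤ p / 2 := by linarith
  have e0 : ((s ^ 2 + 3 * C * d ^ 2) ^ (1 / 2 : ℝ)) ^ p = (s ^ 2 + 3 * C * d ^ 2) ^ (p / 2) := by
    rw [← Real.rpow_mul (by positivity)]; congr 1; ring
  have e : ∀ z : ℝ, 0 < z → z ^ p = (z ^ 2) ^ (p / 2) := by
    intro z hz
    rw [← Real.rpow_natCast, ← Real.rpow_mul hz.le]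
    congr 1; push_cast; ring
  have h1 : (s ^ 2 + 2 * C * d ^ 2) ^ (p / 2) + (C * d ^ 2) ^ (p / 2)
      ≤ (s ^ 2 + 3 * C * d ^ 2) ^ (p / 2) := by
    have := Real.add_rpow_le_rpow_add (a := s ^ 2 + 2 * C * d ^ 2) (b := C * d ^ 2)
      (by positivity) (by positivity) hr
    convert this using 2; ring
  have h2 : C * d ^ p ≤ (C * d ^ 2) ^ (p / 2) := by
    rw [Real.mul_rpow (by positivity) (by positivity), ← e d hd]
    gcongr
    exact Real.self_le_rpow_of_one_le hC hr
  have h3 : s ^ p + 2 * C * (s ^ (p - 2) * d ^ 2) ≤ (s ^ 2 + 2 * C * d ^ 2) ^ (p / 2) := by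
    have f1 : s ^ 2 + 2 * C * d ^ 2 = s ^ 2 * (1 + 2 * C * d ^ 2 / s ^ 2) := by field_simp
    rw [f1, Real.mul_rpow (by positivity) (by positivity), ← e s hs]
    have f2 := one_add_mul_self_le_rpow_one_add (s := 2 * C * d ^ 2 / s ^ 2)
      (by have : 0 ≤ 2 * C * d ^ 2 / s ^ 2 := by positivity
          linarith) hr
    have hsplit : s ^ p = s ^ (p - 2) * s ^ 2 := by
      rw [← Real.rpow_natCast, ← Real.rpow_add hs]; norm_num
    have f3 : 1 + 2 * C * d ^ 2 / s ^ 2 ≤ 1 + p / 2 * (2 * C * d ^ 2 / s ^ 2) := by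
      have : 0 ≤ 2 * C * d ^ 2 / s ^ 2 := by positivity
      nlinarith
    calc s ^ p + 2 * C * (s ^ (p - 2) * d ^ 2) = s ^ p * (1 + 2 * C * d ^ 2 / s ^ 2) := by
          rw [hsplit]; field_simp
      _ ≤ _ := by
          gcongr
          exact f3.trans f2
  rw [e0]
  linarith


theorem urn_eLpNorm_iff {Ω E : Type*} {m0 : MeasurableSpace Ω} {μ : Measure Ω}
    [NormedAddCommGroup E] (p : ℝ) (hp : 2 ≤ p) (f : Ω → E) (hf : MemLp f (ENNReal.ofReal p) μ)
    (s : ℝ) (hs : 0 ≤ s) :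
    eLpNorm f (ENNReal.ofReal p) μ ≤ ENNReal.ofReal s ↔ ∫ ω, ‖f ω‖ ^ p ∂μ ≤ s ^ p := by
  have hp0 : ENNReal.ofReal p ≠ 0 := by
    simp; linarith
  rw [hf.eLpNorm_eq_integral_rpow_norm hp0 ENNReal.ofReal_ne_top,
    ENNReal.toReal_ofReal (by linarith), ENNReal.ofReal_le_ofReal_iff hs,
    Real.rpow_inv_le_iff_of_pos (integral_nonneg fun ω => by positivity) hs (by linarith)]

theorem urn_step {Ω E : Type*} {m0 : MeasurableSpace Ω} {μ : Measure Ω}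
    [IsProbabilityMeasure μ]
    [NormedAddCommGroup E] [InnerProductSpace ℝ E] [CompleteSpace E] (p : ℝ) (hp : 2 ≤ p) :
    ∃ C : ℝ, 1 ≤ C ∧ ∀ (m : MeasurableSpace Ω) (S D : Ω → E) (s d : ℝ), m ≤ m0 → 0 < s → 0 < d →
      MemLp S (ENNReal.ofReal p) μ → MemLp D (ENNReal.ofReal p) μ →
      StronglyMeasurable[m] S → μ[D | m] =ᵐ[μ] 0 →
      eLpNorm S (ENNReal.ofReal p) μ ≤ ENNReal.ofReal s →
      eLpNorm D (ENNReal.ofReal p) μ ≤ ENNReal.ofReal d →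
      eLpNorm (fun ω => S ω + D ω) (ENNReal.ofReal p) μ
        ≤ ENNReal.ofReal ((s ^ 2 + C * d ^ 2) ^ (1 / 2 : ℝ)) := by
  obtain ⟨C, hC, hpt⟩ := urn_pt_ineq (E := E) p hp
  refine ⟨3 * C, by linarith, ?_⟩
  intro m S D s d hm hs hd hS hD hSm hcond hsn hdn
  rw [urn_eLpNorm_iff p hp _ hS s hs.le] at hsn
  rw [urn_eLpNorm_iff p hp _ hD d hd.le] at hdn
  rw [urn_eLpNorm_iff p hp (fun ω => S ω + D ω) (hS.add hD) _ (by positivity)]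
  have hp0 : ENNReal.ofReal p ≠ 0 := by
    simp; linarith
  have htr : (ENNReal.ofReal p).toReal = p := ENNReal.toReal_ofReal (by linarith)
  have iS : Integrable (fun ω => ‖S ω‖ ^ p) μ := by
    have := hS.integrable_norm_rpow hp0 ENNReal.ofReal_ne_top
    rwa [htr] at this
  have iD : Integrable (fun ω => ‖D ω‖ ^ p) μ := by
    have := hD.integrable_norm_rpow hp0 ENNReal.ofReal_ne_top
    rwa [htr] at this
  have iSD : Integrable (fun ω => ‖S ω + D ω‖ ^ p) μ := by
    have := (hS.add hD).integrable_norm_rpow hp0 ENNReal.ofReal_ne_top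
    rwa [htr] at this
  have hp1 : (1 : ENNReal) ≤ ENNReal.ofReal p := by
    rw [← ENNReal.ofReal_one]; exact ENNReal.ofReal_le_ofReal (by linarith)
  have iD1 : Integrable D μ := hD.integrable hp1
  have mS : AEStronglyMeasurable[m0] S μ := hS.1
  have mD : AEStronglyMeasurable[m0] D μ := hD.1
  have mSp : AEStronglyMeasurable[m0] (fun ω => ‖S ω‖ ^ (p - 2)) μ :=
    (mS.norm.aemeasurable.pow_const _).aestronglyMeasurable
  have iM : Integrable (fun ω => ‖S ω‖ ^ (p - 2) * ‖D ω‖ ^ 2) μ := by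
    refine (iS.add iD).mono' (mSp.mul (mD.norm.pow 2)) ?_
    filter_upwards with ω
    rw [Real.norm_of_nonneg (by positivity)]
    exact urn_mul_le_max p hp _ _ (norm_nonneg _) (norm_nonneg _)
  have iI : Integrable (fun ω => ‖S ω‖ ^ (p - 2) * inner ℝ (S ω) (D ω)) μ := by
    refine (iM.add iS).mono' (mSp.mul (mS.inner mD)) ?_
    filter_upwards with ω
    have h0 : 0 ≤ ‖S ω‖ ^ (p - 2) := by positivity
    have h1 : |inner ℝ (S ω) (D ω)| ≤ ‖D ω‖ ^ 2 + ‖S ω‖ ^ 2 := by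
      have := abs_real_inner_le_norm (S ω) (D ω)
      nlinarith [sq_nonneg (‖S ω‖ - ‖D ω‖), sq_nonneg (‖S ω‖ + ‖D ω‖)]
    have h2 : ‖S ω‖ ^ (p - 2) * ‖S ω‖ ^ 2 = ‖S ω‖ ^ p := by
      rcases eq_or_lt_of_le (norm_nonneg (S ω)) with h | h
      · rw [← h]; simp [Real.zero_rpow (by linarith : p ≠ 0)]
      · rw [← Real.rpow_natCast, ← Real.rpow_add h]; norm_num
    rw [norm_mul, Real.norm_of_nonneg h0, Real.norm_eq_abs]
    calc ‖S ω‖ ^ (p - 2) * |inner ℝ (S ω) (D ω)|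
        ≤ ‖S ω‖ ^ (p - 2) * (‖D ω‖ ^ 2 + ‖S ω‖ ^ 2) := by gcongr
      _ = _ := by simp only [Pi.add_apply]; rw [mul_add, h2]
  have hzero : ∫ ω, ‖S ω‖ ^ (p - 2) * inner ℝ (S ω) (D ω) ∂μ = 0 := by
    let f : Ω → E := fun ω => ‖S ω‖ ^ (p - 2) • S ω
    have hf : StronglyMeasurable[m] f := by
      have h1 : StronglyMeasurable[m] (fun ω => ‖S ω‖ ^ (p - 2)) :=
        (hSm.norm.measurable.pow_const _).stronglyMeasurable
      exact h1.smul hSm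
    have heq : (fun ω => ‖S ω‖ ^ (p - 2) * inner ℝ (S ω) (D ω))
        = fun ω => (innerSL ℝ (f ω)) (D ω) := by
      funext ω
      simp [f]
    rw [heq] at iI ⊢
    have hb := condExp_bilin_of_stronglyMeasurable_left (m := m) (innerSL ℝ) hf iI iD1
    rw [← integral_condExp hm, integral_congr_ae hb]
    apply integral_eq_zero_of_ae
    filter_upwards [hcond] with ω hω
    rw [hω]; simp
  have hMb : ∫ ω, ‖S ω‖ ^ (p - 2) * ‖D ω‖ ^ 2 ∂μ ≤ 2 * (s ^ (p - 2) * d ^ 2) := by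
    have hb : ∀ ω, ‖S ω‖ ^ (p - 2) * ‖D ω‖ ^ 2
        ≤ (s ^ (p - 2) * d ^ 2) * (‖S ω‖ ^ p / s ^ p + ‖D ω‖ ^ p / d ^ p) := by
      intro ω
      have := urn_mul_le_max p hp (‖S ω‖ / s) (‖D ω‖ / d) (by positivity) (by positivity)
      rw [Real.div_rpow (norm_nonneg _) hs.le, Real.div_rpow (norm_nonneg _) hs.le,
        Real.div_rpow (norm_nonneg _) hd.le, div_pow] at this
      calc ‖S ω‖ ^ (p - 2) * ‖D ω‖ ^ 2
          = (s ^ (p - 2) * d ^ 2) * (‖S ω‖ ^ (p - 2) / s ^ (p - 2) * (‖D ω‖ ^ 2 / d ^ 2)) := by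
            have : s ^ (p - 2) ≠ 0 := by positivity
            field_simp
        _ ≤ _ := by gcongr
    calc ∫ ω, ‖S ω‖ ^ (p - 2) * ‖D ω‖ ^ 2 ∂μ
        ≤ ∫ ω, (s ^ (p - 2) * d ^ 2) * (‖S ω‖ ^ p / s ^ p + ‖D ω‖ ^ p / d ^ p) ∂μ :=
          integral_mono iM (((iS.div_const _).add (iD.div_const _)).const_mul _) hb
      _ = (s ^ (p - 2) * d ^ 2) * ((∫ ω, ‖S ω‖ ^ p ∂μ) / s ^ p + (∫ ω, ‖D ω‖ ^ p ∂μ) / d ^ p) := by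
          rw [integral_const_mul, integral_add (iS.div_const _) (iD.div_const _),
            integral_div, integral_div]
      _ ≤ (s ^ (p - 2) * d ^ 2) * (1 + 1) := by
          gcongr
          · exact div_le_one_of_le₀ hsn (by positivity)
          · exact div_le_one_of_le₀ hdn (by positivity)
      _ = _ := by ring
  calc ∫ ω, ‖S ω + D ω‖ ^ p ∂μ
      ≤ ∫ ω, (‖S ω‖ ^ p + p * (‖S ω‖ ^ (p - 2) * inner ℝ (S ω) (D ω))
        + C * (‖S ω‖ ^ (p - 2) * ‖D ω‖ ^ 2 + ‖D ω‖ ^ p)) ∂μ :=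
        integral_mono iSD ((iS.add (iI.const_mul p)).add ((iM.add iD).const_mul C))
          (fun ω => hpt _ _)
    _ = ∫ ω, ‖S ω‖ ^ p ∂μ + p * 0
        + C * (∫ ω, ‖S ω‖ ^ (p - 2) * ‖D ω‖ ^ 2 ∂μ + ∫ ω, ‖D ω‖ ^ p ∂μ) := by
        rw [← hzero]
        have j1 : Integrable (fun ω => ‖S ω‖ ^ p
            + p * (‖S ω‖ ^ (p - 2) * inner ℝ (S ω) (D ω))) μ := iS.add (iI.const_mul p)
        have j2 : Integrable (fun ω => C * (‖S ω‖ ^ (p - 2) * ‖D ω‖ ^ 2 + ‖D ω‖ ^ p)) μ :=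
          (iM.add iD).const_mul C
        rw [integral_add j1 j2,
          integral_add iS (iI.const_mul p), integral_const_mul, integral_const_mul,
          integral_add iM iD]
    _ ≤ s ^ p + p * 0 + C * (2 * (s ^ (p - 2) * d ^ 2) + d ^ p) := by gcongr
    _ = s ^ p + C * (2 * (s ^ (p - 2) * d ^ 2) + d ^ p) := by ring
    _ ≤ _ := urn_scalar p hp C s d hC hs hd


/-- Ordered products `(1 + x (k+m-1)) ⋯ (1 + x k)`. -/
def urnB {R : Type*} [Ring R] (x : ℕ → R) (k : ℕ) : ℕ → R
  | 0 => 1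
  | m + 1 => (1 + x (k + m)) * urnB x k m

theorem urnB_succ_right {R : Type*} [Ring R] (x : ℕ → R) (k m : ℕ) :
    urnB x k (m + 1) = urnB x (k + 1) m * (1 + x k) := by
  induction m with
  | zero => simp [urnB]
  | succ m ih =>
    rw [urnB, ih, urnB, mul_assoc]
    congr 3
    ring

theorem urnB_map {R S : Type*} [Ring R] [Ring S] (f : R →+* S) (x : ℕ → R) (k m : ℕ) :
    f (urnB x k m) = urnB (fun j => f (x j)) k m := by
  induction m with
  | zero => simp [urnB]
  | succ m ih => simp [urnB, ih]

theorem urn_mart {Ω E : Type*} {m0 : MeasurableSpace Ω} {μ : Measure Ω}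
    [IsProbabilityMeasure μ]
    [NormedAddCommGroup E] [InnerProductSpace ℝ E] [CompleteSpace E] (p : ℝ) (hp : 2 ≤ p)
    (ℱ : Filtration ℕ m0) (c : ℕ → ℝ) (L : E →L[ℝ] E) (X : ℕ → Ω → E)
    (hadp : ∀ n, StronglyMeasurable[ℱ n] (X n)) (x₀ : E) (hX0 : X 0 = fun _ => x₀)
    (hcond : ∀ n, μ[fun ω => X (n + 1) ω - X n ω | ℱ n] =ᵐ[μ] fun ω => c n • L (X n ω))
    (hmem : ∀ n, MemLp (X n) (ENNReal.ofReal p) μ)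
    (K : ℝ) (hK : 0 < K)
    (hD : ∀ n, eLpNorm (fun ω => X (n + 1) ω - X n ω - c n • L (X n ω)) (ENNReal.ofReal p) μ
      ≤ ENNReal.ofReal K)
    (W : Submodule ℝ E)
    (hW : ∀ n, ∀ᵐ ω ∂μ, X (n + 1) ω - X n ω - c n • L (X n ω) ∈ W)
    (φ : ℕ → ℕ → ℝ) (hφpos : ∀ k m, 0 < φ k m)
    (hφ : ∀ k m, ∀ v ∈ W, ‖urnB (fun j => c j • L) k m v‖ ≤ φ k m * ‖v‖) :
    ∃ C : ℝ, 0 ≤ C ∧ ∀ n, eLpNorm (fun ω => X n ω - ∫ ω', X n ω' ∂μ) (ENNReal.ofReal p) μ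
      ≤ ENNReal.ofReal ((1 + C * ∑ k ∈ Finset.range n, φ (k + 1) (n - (k + 1)) ^ 2) ^ (1 / 2 : ℝ)) := by
  obtain ⟨C, hC, hstep⟩ := urn_step (Ω := Ω) (E := E) (μ := μ) p hp
  refine ⟨C * K ^ 2, by positivity, fun n => ?_⟩
  have hp1 : (1 : ENNReal) ≤ ENNReal.ofReal p := by
    rw [← ENNReal.ofReal_one]; exact ENNReal.ofReal_le_ofReal (by linarith)
  have hint : ∀ n, Integrable (X n) μ := fun n => (hmem n).integrable hp1
  let D : ℕ → Ω → E := fun m ω => X (m + 1) ω - X m ω - c m • L (X m ω)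
  let Y : ℕ → Ω → E := fun m ω => X m ω - ∫ ω', X m ω' ∂μ
  let B : ℕ → E →L[ℝ] E := fun m => urnB (fun j => c j • L) m (n - m)
  have hDcond : ∀ m, μ[D m | ℱ m] =ᵐ[μ] 0 := by
    intro m
    have hm1 : StronglyMeasurable[ℱ m] (fun ω => c m • L (X m ω)) :=
      (L.continuous.comp_stronglyMeasurable (hadp m)).const_smul (c m)
    have hi1 : Integrable (fun ω => c m • L (X m ω)) μ := (L.integrable_comp (hint m)).smul (c m)
    have h1 := condExp_sub (m := ℱ m) ((hint (m + 1)).sub (hint m)) hi1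
    have h2 := condExp_of_stronglyMeasurable (ℱ.le m) hm1 hi1
    have h3 : D m = (X (m + 1) - X m) - fun ω => c m • L (X m ω) := rfl
    have h4 := hcond m
    rw [h3]
    refine h1.trans ?_
    rw [h2]
    filter_upwards [h4] with ω hω
    have : μ[X (m + 1) - X m | ℱ m] ω = c m • L (X m ω) := hω
    simp [this]
  have hDmem : ∀ m, MemLp (D m) (ENNReal.ofReal p) μ := fun m =>
    ((hmem (m + 1)).sub (hmem m)).sub ((L.comp_memLp' (hmem m)).const_smul (c m))
  have hmean : ∀ m, ∫ ω, X (m + 1) ω ∂μ = (∫ ω, X m ω ∂μ) + c m • L (∫ ω, X m ω ∂μ) := by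
    intro m
    have hi1 : Integrable (fun ω => c m • L (X m ω)) μ := (L.integrable_comp (hint m)).smul (c m)
    have h0 : ∫ ω, D m ω ∂μ = 0 := by
      rw [← integral_condExp (ℱ.le m)]
      exact integral_eq_zero_of_ae (hDcond m)
    have h1 : ∫ ω, D m ω ∂μ = ∫ ω, X (m + 1) ω ∂μ - ∫ ω, X m ω ∂μ - c m • L (∫ ω, X m ω ∂μ) := by
      have e1 : ∫ ω, D m ω ∂μ = ∫ ω, (X (m + 1) ω - X m ω) ∂μ - ∫ ω, c m • L (X m ω) ∂μ :=
        integral_sub ((hint (m + 1)).sub (hint m)) hi1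
      rw [e1, integral_sub (hint (m + 1)) (hint m), integral_smul, L.integral_comp_comm (hint m)]
    rw [h0] at h1
    rw [← sub_eq_zero, h1]; abel
  have hY : ∀ m ω, Y (m + 1) ω = (Y m ω + c m • L (Y m ω)) + D m ω := by
    intro m ω
    simp only [Y, D, hmean m, map_sub, smul_sub]
    abel
  have hYmem : ∀ m, MemLp (Y m) (ENNReal.ofReal p) μ := fun m => (hmem m).sub (memLp_const _)
  have hYad : ∀ m, StronglyMeasurable[ℱ m] (Y m) := fun m =>
    (hadp m).sub stronglyMeasurable_const
  have key : ∀ m, m ≤ n → eLpNorm (fun ω => B m (Y m ω)) (ENNReal.ofReal p) μ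
      ≤ ENNReal.ofReal ((1 + C * K ^ 2 * ∑ k ∈ Finset.range m, φ (k + 1) (n - (k + 1)) ^ 2)
        ^ (1 / 2 : ℝ)) := by
    intro m
    induction m with
    | zero =>
      intro _
      have : (fun ω => B 0 (Y 0 ω)) = 0 := by
        funext ω
        simp [Y, hX0]
      rw [this]; simp
    | succ m ih =>
      intro hmn
      have hB : ∀ v, B m v = B (m + 1) (v + c m • L v) := by
        intro v
        have e : n - m = (n - (m + 1)) + 1 := by omega
        simp only [B]
        rw [e, urnB_succ_right]
        simp
      have hS : (fun ω => B (m + 1) (Y (m + 1) ω))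
          = fun ω => B m (Y m ω) + B (m + 1) (D m ω) := by
        funext ω
        rw [hY, map_add, ← hB]
      have hsum : 0 ≤ ∑ k ∈ Finset.range m, φ (k + 1) (n - (k + 1)) ^ 2 :=
        Finset.sum_nonneg fun _ _ => sq_nonneg _
      have hBD : eLpNorm (fun ω => B (m + 1) (D m ω)) (ENNReal.ofReal p) μ
          ≤ ENNReal.ofReal (φ (m + 1) (n - (m + 1)) * K) := by
        have h1 : ∀ᵐ ω ∂μ, ‖B (m + 1) (D m ω)‖ ≤ φ (m + 1) (n - (m + 1)) * ‖D m ω‖ := by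
          filter_upwards [hW m] with ω hω
          exact hφ _ _ _ hω
        calc _ ≤ ENNReal.ofReal (φ (m + 1) (n - (m + 1))) * eLpNorm (D m) (ENNReal.ofReal p) μ :=
              eLpNorm_le_mul_eLpNorm_of_ae_le_mul h1 _
          _ ≤ ENNReal.ofReal (φ (m + 1) (n - (m + 1))) * ENNReal.ofReal K := by
              gcongr; exact hD m
          _ = _ := (ENNReal.ofReal_mul (hφpos _ _).le).symm
      have hBc : μ[fun ω => B (m + 1) (D m ω) | ℱ m] =ᵐ[μ] 0 := by
        have h1 := ContinuousLinearMap.comp_condExp_comm (m := ℱ m)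
          ((hDmem m).integrable hp1) (B (m + 1))
        refine EventuallyEq.trans h1.symm ?_
        filter_upwards [hDcond m] with ω hω
        simp [hω]
      have := hstep (ℱ m) (fun ω => B m (Y m ω)) (fun ω => B (m + 1) (D m ω)) _ _ (ℱ.le m)
        (Real.rpow_pos_of_pos (by positivity) _) (mul_pos (hφpos _ _) hK)
        ((B m).comp_memLp' (hYmem m)) ((B (m + 1)).comp_memLp' (hDmem m))
        ((B m).continuous.comp_stronglyMeasurable (hYad m)) hBc (ih (by omega)) hBD
      rw [hS]
      refine this.trans (le_of_eq ?_)
      congr 2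
      rw [← Real.rpow_natCast, ← Real.rpow_mul (by positivity), Finset.sum_range_succ]
      norm_num
      ring
  have := key n le_rfl
  simpa [B, urnB] using this


/-- Partial sums of the step sizes. -/
def urnT (c : ℕ → ℝ) (k m : ℕ) : ℝ := ∑ j ∈ Finset.range m, c (k + j)

theorem urnT_nonneg (c : ℕ → ℝ) (hc : ∀ j, 0 < c j) (k m : ℕ) : 0 ≤ urnT c k m :=
  Finset.sum_nonneg fun _ _ => (hc _).le

theorem urnT_succ (c : ℕ → ℝ) (k m : ℕ) : urnT c k (m + 1) = urnT c k m + c (k + m) := by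
  simp [urnT, Finset.sum_range_succ]

theorem urn_core (c : ℕ → ℝ) (hc : ∀ j, 0 < c j) (cb : ℝ) (hcb : ∀ j, c j ≤ cb)
    (r Λ G : ℝ) (hΛ : 0 ≤ Λ) (hG : 0 ≤ G) (N k : ℕ) (u : ℕ → ℝ)
    (hu : ∀ m, u (m + 1) ≤ Real.exp (r * c (k + m) + Λ * c (k + m) ^ 2) * u m
      + c (k + m) * (G * Real.exp (r * urnT c k m) * (1 + urnT c k m) ^ N)) (m : ℕ) :
    u m ≤ Real.exp (r * urnT c k m + Λ * urnT (fun j => c j ^ 2) k m)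
      * (u 0 + G * Real.exp (|r| * cb) * (urnT c k m * (1 + urnT c k m) ^ N)) := by
  induction m with
  | zero => simp [urnT]
  | succ m ih =>
    have hT := urnT_nonneg c hc k m
    have hS := urnT_nonneg (fun j => c j ^ 2) (fun j => pow_pos (hc j) 2) k m
    rw [urnT_succ, urnT_succ]
    set T := urnT c k m
    set S := urnT (fun j => c j ^ 2) k m
    set cm := c (k + m)
    have hcm : 0 < cm := hc _
    have e1 : Real.exp (r * (T + cm) + Λ * (S + cm ^ 2))
        = Real.exp (r * cm + Λ * cm ^ 2) * Real.exp (r * T + Λ * S) := by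
      rw [← Real.exp_add]; ring_nf
    have e2 : Real.exp (r * T) ≤ Real.exp (r * (T + cm) + Λ * (S + cm ^ 2))
        * Real.exp (|r| * cb) := by
      rw [← Real.exp_add]
      apply Real.exp_le_exp.2
      have h1 : -(|r| * cb) ≤ r * cm := by
        have h2 : |r| * cm ≤ |r| * cb := mul_le_mul_of_nonneg_left (hcb _) (abs_nonneg _)
        nlinarith [neg_abs_le r]
      have h3 : 0 ≤ Λ * (S + cm ^ 2) := by positivity
      linarith
    calc u (m + 1) ≤ Real.exp (r * cm + Λ * cm ^ 2) * u m
          + cm * (G * Real.exp (r * T) * (1 + T) ^ N) := hu m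
      _ ≤ Real.exp (r * cm + Λ * cm ^ 2) * (Real.exp (r * T + Λ * S)
          * (u 0 + G * Real.exp (|r| * cb) * (T * (1 + T) ^ N)))
          + cm * (G * (Real.exp (r * (T + cm) + Λ * (S + cm ^ 2))
          * Real.exp (|r| * cb)) * (1 + T) ^ N) := by gcongr
      _ = Real.exp (r * (T + cm) + Λ * (S + cm ^ 2))
          * (u 0 + G * Real.exp (|r| * cb) * ((T + cm) * (1 + T) ^ N)) := by
          rw [e1]; ring
      _ ≤ Real.exp (r * (T + cm) + Λ * (S + cm ^ 2))
          * (u 0 + G * Real.exp (|r| * cb) * ((T + cm) * (1 + (T + cm)) ^ N)) := by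
          gcongr; linarith

theorem urn_norm_one_add (lam : ℂ) (c : ℝ) :
    ‖1 + (c : ℂ) * lam‖ ≤ Real.exp (lam.re * c + (‖lam‖ ^ 2 / 2) * c ^ 2) := by
  have h1 : ‖1 + (c : ℂ) * lam‖ ^ 2 ≤ Real.exp (lam.re * c + (‖lam‖ ^ 2 / 2) * c ^ 2) ^ 2 := by
    rw [← Real.exp_nat_mul]
    have h2 : ‖1 + (c : ℂ) * lam‖ ^ 2 = 2 * (lam.re * c + (‖lam‖ ^ 2 / 2) * c ^ 2) + 1 := by
      rw [← Complex.normSq_eq_norm_sq, ← Complex.normSq_eq_norm_sq, Complex.normSq_apply,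
        Complex.normSq_apply]
      simp
      ring
    rw [h2]
    exact_mod_cast Real.add_one_le_exp _
  exact (sq_le_sq₀ (norm_nonneg _) (Real.exp_nonneg _)).1 h1

theorem urn_good_gen {V : Type*} [NormedAddCommGroup V] [NormedSpace ℂ V] (f : Module.End ℂ V)
    (c : ℕ → ℝ) (hc : ∀ j, 0 < c j) (cb : ℝ) (hcb : ∀ j, c j ≤ cb) (M : ℝ)
    (hM : ∀ k m, urnT (fun j => c j ^ 2) k m ≤ M) (lam : ℂ) (N : ℕ) :
    ∀ v : V, ((f - lam • 1) ^ (N + 1)) v = 0 → ∃ C : ℝ, 0 ≤ C ∧ ∀ k m,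
      ‖urnB (fun j => (c j : ℂ) • f) k m v‖
        ≤ C * (Real.exp (lam.re * urnT c k m) * (1 + urnT c k m) ^ N) := by
  have hcomm : ∀ k m, Commute f (urnB (fun j => (c j : ℂ) • f) k m) := by
    intro k m
    induction m with
    | zero => exact Commute.one_right _
    | succ m ih =>
      exact ((Commute.one_right _).add_right ((Commute.refl f).smul_right _)).mul_right ih
  have hrec : ∀ k m v, urnB (fun j => (c j : ℂ) • f) k (m + 1) v
      = (1 + (c (k + m) : ℂ) * lam) • urnB (fun j => (c j : ℂ) • f) k m v
        + (c (k + m) : ℂ) • urnB (fun j => (c j : ℂ) • f) k m ((f - lam • 1) v) := by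
    intro k m v
    have h1 : f (urnB (fun j => (c j : ℂ) • f) k m v) = urnB (fun j => (c j : ℂ) • f) k m (f v) :=
      congrArg (fun g : Module.End ℂ V => g v) (hcomm k m).eq
    simp only [urnB, Module.End.mul_apply, LinearMap.add_apply, Module.End.one_apply,
      LinearMap.smul_apply, LinearMap.sub_apply, map_sub, map_smul, h1]
    module
  have hstep : ∀ (v : V) (G : ℝ) (N : ℕ), 0 ≤ G → (∀ k m,
      ‖urnB (fun j => (c j : ℂ) • f) k m ((f - lam • 1) v)‖
        ≤ G * Real.exp (lam.re * urnT c k m) * (1 + urnT c k m) ^ N) → ∀ k m,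
      ‖urnB (fun j => (c j : ℂ) • f) k m v‖ ≤ Real.exp (lam.re * urnT c k m
          + (‖lam‖ ^ 2 / 2) * urnT (fun j => c j ^ 2) k m)
      * (‖v‖ + G * Real.exp (|lam.re| * cb) * (urnT c k m * (1 + urnT c k m) ^ N)) := by
    intro v G N hG hv k m
    have := urn_core c hc cb hcb lam.re (‖lam‖ ^ 2 / 2) G (by positivity) hG N k
      (fun m => ‖urnB (fun j => (c j : ℂ) • f) k m v‖) (by
        intro m
        rw [hrec]
        refine (norm_add_le _ _).trans ?_
        rw [norm_smul, norm_smul, Complex.norm_real, Real.norm_of_nonneg (hc _).le]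
        gcongr
        · exact urn_norm_one_add _ _
        · exact (hc _).le
        · exact hv k m) m
    simpa [urnB] using this
  have hexp : ∀ k m, Real.exp (lam.re * urnT c k m
          + (‖lam‖ ^ 2 / 2) * urnT (fun j => c j ^ 2) k m)
      ≤ Real.exp (lam.re * urnT c k m) * Real.exp ((‖lam‖ ^ 2 / 2) * M) := by
    intro k m
    rw [Real.exp_add]
    gcongr
    exact hM k m
  induction N with
  | zero =>
    intro v hv
    refine ⟨Real.exp ((‖lam‖ ^ 2 / 2) * M) * ‖v‖, by positivity, fun k m => ?_⟩
    have hv' : (f - lam • 1) v = 0 := by simpa using hv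
    have h1 := hstep v 0 0 le_rfl (by intro k m; rw [hv']; simp) k m
    refine h1.trans ?_
    calc _ ≤ Real.exp (lam.re * urnT c k m) * Real.exp ((‖lam‖ ^ 2 / 2) * M) * ‖v‖ := by
          simp only [zero_mul, add_zero]
          gcongr
          exact hexp k m
      _ = _ := by ring
  | succ N ih =>
    intro v hv
    obtain ⟨G, hG, hGb⟩ := ih ((f - lam • 1) v) (by
      rw [← Module.End.mul_apply, ← pow_succ]; exact hv)
    refine ⟨Real.exp ((‖lam‖ ^ 2 / 2) * M) * (‖v‖ + G * Real.exp (|lam.re| * cb)), by positivity,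
      fun k m => ?_⟩
    have h1 := hstep v G N hG (by intro k m; rw [mul_assoc]; exact hGb k m) k m
    refine h1.trans ?_
    have hT := urnT_nonneg c hc k m
    have h2 : (1 : ℝ) ≤ (1 + urnT c k m) ^ (N + 1) := one_le_pow₀ (by linarith)
    have h3 : urnT c k m * (1 + urnT c k m) ^ N ≤ (1 + urnT c k m) ^ (N + 1) := by
      rw [pow_succ']
      gcongr
      linarith
    calc _ ≤ (Real.exp (lam.re * urnT c k m) * Real.exp ((‖lam‖ ^ 2 / 2) * M))
          * (‖v‖ * (1 + urnT c k m) ^ (N + 1)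
            + G * Real.exp (|lam.re| * cb) * (1 + urnT c k m) ^ (N + 1)) := by
          gcongr
          · exact hexp k m
          · exact le_mul_of_one_le_right (norm_nonneg _) h2
      _ = _ := by ring

theorem urn_pow_le_exp (ε : ℝ) (hε : 0 < ε) (N : ℕ) :
    ∃ C : ℝ, 0 ≤ C ∧ ∀ T : ℝ, 0 ≤ T → (1 + T) ^ N ≤ C * Real.exp (ε * T) := by
  refine ⟨N.factorial / ε ^ N * Real.exp ε, by positivity, fun T hT => ?_⟩
  have h := Real.pow_div_factorial_le_exp (ε * (1 + T)) (by positivity) N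
  rw [mul_pow, div_le_iff₀ (by positivity)] at h
  have e : Real.exp (ε * (1 + T)) = Real.exp ε * Real.exp (ε * T) := by
    rw [← Real.exp_add]; ring_nf
  rw [e] at h
  calc (1 + T) ^ N = (ε ^ N * (1 + T) ^ N) / ε ^ N := by field_simp
    _ ≤ (Real.exp ε * Real.exp (ε * T) * N.factorial) / ε ^ N := by gcongr
    _ = _ := by ring


theorem urn_mem_gen {q : ℕ} (A : Matrix (Fin q) (Fin q) ℂ) (mu : ℂ) (v : Fin q → ℂ) :
    v ∈ Module.End.maxGenEigenspace (Matrix.toLinAlgEquiv' A) mu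
      ↔ ((A - mu • 1) ^ q).mulVec v = 0 := by
  rw [Module.End.maxGenEigenspace_eq_genEigenspace_finrank, Module.End.mem_genEigenspace_nat,
    LinearMap.mem_ker, ← Matrix.toLinAlgEquiv'_apply, map_pow, map_sub, map_smul, map_one]
  simp

theorem urn_isCompl {q : ℕ} (A : Matrix (Fin q) (Fin q) ℂ) (mu : ℂ) :
    IsCompl (Module.End.maxGenEigenspace (Matrix.toLinAlgEquiv' A) mu)
      (⨆ j, ⨆ (_ : j ≠ mu), Module.End.maxGenEigenspace (Matrix.toLinAlgEquiv' A) j) := by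
  constructor
  · exact Module.End.independent_maxGenEigenspace (Matrix.toLinAlgEquiv' A) mu
  · rw [codisjoint_iff, ← iSup_split_single]
    exact Module.End.iSup_maxGenEigenspace_eq_top _

theorem urn_exists_proj {q : ℕ} (hq : 0 < q) (A : Matrix (Fin q) (Fin q) ℂ) (mu : ℂ) :
    ∃ (P : Matrix (Fin q) (Fin q) ℂ) (ν : ℕ), IsSpectralProj A mu P ∧ NilIndexOf A mu P ν := by
  classical
  let π := Submodule.projection _ _ (urn_isCompl A mu)
  let P := LinearMap.toMatrixAlgEquiv' π
  have hPv : ∀ v, P.mulVec v = π v := by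
    intro v
    rw [← Matrix.toLinAlgEquiv'_apply, Matrix.toLinAlgEquiv'_toMatrixAlgEquiv']
  have hP : IsSpectralProj A mu P := by
    constructor
    · intro v hv
      rw [hPv]
      exact Submodule.projection_apply_of_mem_left _ ((urn_mem_gen A mu v).2 hv)
    · intro mu' hne v hv
      rw [hPv]
      apply Submodule.projection_apply_of_mem_right
      exact Submodule.mem_iSup_of_mem mu' (Submodule.mem_iSup_of_mem hne ((urn_mem_gen A mu' v).2 hv))
  have hk : ∀ k (v : Fin q → ℂ), ((A - mu • 1) ^ q).mulVec v = 0 →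
      (((A - mu • 1) * P) ^ k).mulVec v = ((A - mu • 1) ^ k).mulVec v := by
    intro k
    induction k with
    | zero => intro v _; simp
    | succ k ih =>
      intro v hv
      rw [pow_succ, pow_succ, ← Matrix.mulVec_mulVec, ← Matrix.mulVec_mulVec, ← Matrix.mulVec_mulVec,
        hP.1 v hv, ih]
      rw [Matrix.mulVec_mulVec, ← pow_succ, pow_succ', ← Matrix.mulVec_mulVec, hv,
        Matrix.mulVec_zero]
  have hnil : ((A - mu • 1) * P) ^ q = 0 := by
    apply Matrix.toLinAlgEquiv'.injective
    rw [map_zero]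
    have htop : (⊤ : Submodule ℂ (Fin q → ℂ))
        ≤ LinearMap.ker (Matrix.toLinAlgEquiv' (((A - mu • 1) * P) ^ q)) := by
      rw [← (urn_isCompl A mu).sup_eq_top]
      apply sup_le
      · intro v hv
        rw [LinearMap.mem_ker, Matrix.toLinAlgEquiv'_apply]
        rw [urn_mem_gen] at hv
        rw [hk q v hv, hv]
      · apply iSup_le; intro j; apply iSup_le; intro hj v hv
        rw [LinearMap.mem_ker, Matrix.toLinAlgEquiv'_apply]
        rw [urn_mem_gen] at hv
        obtain ⟨q', rfl⟩ : ∃ q', q = q' + 1 := ⟨q - 1, by omega⟩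
        rw [pow_succ, ← Matrix.mulVec_mulVec, ← Matrix.mulVec_mulVec, hP.2 j hj v hv,
          Matrix.mulVec_zero, Matrix.mulVec_zero]
    exact LinearMap.ker_eq_top.1 (top_le_iff.1 htop)
  have hex : ∃ k, ((A - mu • 1) * P) ^ (k + 1) = 0 := ⟨q - 1, by
    rw [Nat.sub_add_cancel hq]; exact hnil⟩
  refine ⟨P, Nat.find hex, hP, Nat.find_spec hex, ?_⟩
  rcases Nat.eq_zero_or_pos (Nat.find hex) with h | h
  · exact Or.inl h
  · right
    have := Nat.find_min hex (m := Nat.find hex - 1) (by omega)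
    rwa [Nat.sub_add_cancel h] at this

theorem urn_nil_pow {q : ℕ} (A : Matrix (Fin q) (Fin q) ℂ) (mu : ℂ) (P : Matrix (Fin q) (Fin q) ℂ)
    (hP : IsSpectralProj A mu P) : ∀ k (v : Fin q → ℂ), ((A - mu • 1) ^ q).mulVec v = 0 →
      (((A - mu • 1) * P) ^ k).mulVec v = ((A - mu • 1) ^ k).mulVec v := by
  intro k
  induction k with
  | zero => intro v _; simp
  | succ k ih =>
    intro v hv
    rw [pow_succ, pow_succ, ← Matrix.mulVec_mulVec, ← Matrix.mulVec_mulVec, ← Matrix.mulVec_mulVec,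
      hP.1 v hv, ih]
    rw [Matrix.mulVec_mulVec, ← pow_succ, pow_succ', ← Matrix.mulVec_mulVec, hv,
      Matrix.mulVec_zero]

/-- Vectors along which the products grow at most like `exp (r T) (1+T)^ν`. -/
def urnGood {V : Type*} [NormedAddCommGroup V] [NormedSpace ℂ V] (f : Module.End ℂ V)
    (c : ℕ → ℝ) (hc : ∀ j, 0 < c j) (r : ℝ) (ν : ℕ) : Submodule ℂ V where
  carrier := {v | ∃ C : ℝ, 0 ≤ C ∧ ∀ k m, ‖urnB (fun j => (c j : ℂ) • f) k m v‖
        ≤ C * (Real.exp (r * urnT c k m) * (1 + urnT c k m) ^ ν)}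
  zero_mem' := ⟨0, le_rfl, by simp⟩
  add_mem' := by
    rintro x y ⟨C, hC, hx⟩ ⟨C', hC', hy⟩
    refine ⟨C + C', by positivity, fun k m => ?_⟩
    rw [map_add, add_mul]
    exact (norm_add_le _ _).trans (add_le_add (hx k m) (hy k m))
  smul_mem' := by
    rintro a x ⟨C, hC, hx⟩
    refine ⟨‖a‖ * C, by positivity, fun k m => ?_⟩
    rw [map_smul, norm_smul, mul_assoc]
    exact mul_le_mul_of_nonneg_left (hx k m) (norm_nonneg _)

theorem urn_kernel_good {q : ℕ} (hq : 0 < q) (A : Matrix (Fin q) (Fin q) ℂ) (b : ℝ)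
    (a : Fin q → ℂ) (ha : a ≠ 0) (hA : Matrix.vecMul a A = (b : ℂ) • a)
    (c : ℕ → ℝ) (hc : ∀ j, 0 < c j) (cb : ℝ) (hcb : ∀ j, c j ≤ cb) (M : ℝ)
    (hM : ∀ k m, urnT (fun j => c j ^ 2) k m ≤ M)
    (lam2 : ℂ)
    (h2max : ∀ mu : ℂ, MemSecondEigSet A b mu → mu.re ≤ lam2.re)
    (ν₂ : ℕ)
    (hν2max : ∀ (mu : ℂ) (P' : Matrix (Fin q) (Fin q) ℂ) (ν' : ℕ),
      MemSecondEigSet A b mu → mu.re = lam2.re →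
      IsSpectralProj A mu P' → NilIndexOf A mu P' ν' → ν' ≤ ν₂)
    (v : Fin q → ℂ) (hv : a ⬝ᵥ v = 0) :
    v ∈ urnGood (Matrix.toLinAlgEquiv' A) c hc lam2.re ν₂ := by
  set f : Module.End ℂ (Fin q → ℂ) := Matrix.toLinAlgEquiv' A with hf
  have hpow : ∀ (mu : ℂ) (k : ℕ) (x : Fin q → ℂ),
      ((f - mu • 1) ^ k) x = ((A - mu • 1) ^ k).mulVec x := by
    intro mu k x
    rw [← Matrix.toLinAlgEquiv'_apply, map_pow, map_sub, map_smul, map_one]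
  have hcand : ∀ mu, MemSecondEigSet A b mu → f.maxGenEigenspace mu ≤ urnGood f c hc lam2.re ν₂ := by
    intro mu hmu x hx
    rw [hf, urn_mem_gen] at hx
    rcases lt_or_eq_of_le (h2max mu hmu) with hlt | heq
    · obtain ⟨C, hC, hb⟩ := urn_good_gen f c hc cb hcb M hM mu q x (by
        rw [hpow, pow_succ', ← Matrix.mulVec_mulVec, hx, Matrix.mulVec_zero])
      obtain ⟨C', hC', hb'⟩ := urn_pow_le_exp (lam2.re - mu.re) (by linarith) q
      refine ⟨C * C', by positivity, fun k m => (hb k m).trans ?_⟩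
      have hT := urnT_nonneg c hc k m
      have h1 : (1 : ℝ) ≤ (1 + urnT c k m) ^ ν₂ := one_le_pow₀ (by linarith)
      calc C * (Real.exp (mu.re * urnT c k m) * (1 + urnT c k m) ^ q)
          ≤ C * (Real.exp (mu.re * urnT c k m)
            * (C' * Real.exp ((lam2.re - mu.re) * urnT c k m))) := by
            gcongr; exact hb' _ hT
        _ = C * C' * (Real.exp (lam2.re * urnT c k m) * 1) := by
            have : Real.exp (lam2.re * urnT c k m) = Real.exp (mu.re * urnT c k m)
              * Real.exp ((lam2.re - mu.re) * urnT c k m) := by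
              rw [← Real.exp_add]; ring_nf
            rw [this]; ring
        _ ≤ _ := by gcongr
    · obtain ⟨P, ν', hP, hν⟩ := urn_exists_proj hq A mu
      have hle := hν2max mu P ν' hmu heq hP hν
      have h0 : ((A - mu • 1) * P) ^ (ν₂ + 1) = 0 :=
        pow_eq_zero_of_le (by omega) hν.1
      obtain ⟨C, hC, hb⟩ := urn_good_gen f c hc cb hcb M hM mu ν₂ x (by
        rw [hpow, ← urn_nil_pow A mu P hP _ x hx, h0, Matrix.zero_mulVec])
      rw [heq] at hb
      exact ⟨C, hC, hb⟩
  have hne : ∀ mu, mu ≠ (b : ℂ) → f.maxGenEigenspace mu ≤ urnGood f c hc lam2.re ν₂ := by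
    intro mu hmu
    by_cases hs : mu ∈ spectrum ℂ A
    · exact hcand mu (Or.inl ⟨hmu, hs⟩)
    · intro x hx
      rw [hf, urn_mem_gen] at hx
      rw [spectrum.notMem_iff] at hs
      have hu : IsUnit (A - mu • (1 : Matrix (Fin q) (Fin q) ℂ)) := by
        have : A - mu • (1 : Matrix (Fin q) (Fin q) ℂ) = -(algebraMap ℂ _ mu - A) := by
          rw [Algebra.algebraMap_eq_smul_one]; abel
        rw [this]; exact hs.neg
      obtain ⟨w, hw⟩ := hu.pow q
      have hx0 : x = 0 := by
        have : ((↑w⁻¹ : Matrix (Fin q) (Fin q) ℂ)).mulVec (((A - mu • 1) ^ q).mulVec x) = x := by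
          rw [← hw, Matrix.mulVec_mulVec, Units.inv_mul, Matrix.one_mulVec]
        rw [← this, hx, Matrix.mulVec_zero]
      rw [hx0]; exact Submodule.zero_mem _
  by_cases hm : 2 ≤ Polynomial.rootMultiplicity (b : ℂ) (Matrix.charpoly A)
  · have htop : (⊤ : Submodule ℂ (Fin q → ℂ)) ≤ urnGood f c hc lam2.re ν₂ := by
      rw [← Module.End.iSup_maxGenEigenspace_eq_top f]
      apply iSup_le
      intro mu
      by_cases h : mu = (b : ℂ)
      · exact hcand mu (Or.inr ⟨h, hm⟩)
      · exact hne mu h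
    exact htop trivial
  · let α : (Fin q → ℂ) →ₗ[ℂ] ℂ := dotProductBilin ℂ ℂ a
    have hα : ∀ x, α x = a ⬝ᵥ x := fun x => rfl
    have hαA : ∀ (mu : ℂ) (k : ℕ) x, a ⬝ᵥ (((A - mu • 1) ^ k).mulVec x)
        = ((b : ℂ) - mu) ^ k * (a ⬝ᵥ x) := by
      intro mu k
      induction k with
      | zero => intro x; simp
      | succ k ih =>
        intro x
        rw [pow_succ, ← Matrix.mulVec_mulVec, ih, Matrix.dotProduct_mulVec, Matrix.vecMul_sub, hA,
          Matrix.vecMul_smul, Matrix.vecMul_one, ← sub_smul, smul_dotProduct, pow_succ]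
        simp only [smul_eq_mul]; ring
    have hker : (⨆ j, ⨆ (_ : j ≠ (b : ℂ)), f.maxGenEigenspace j) ≤ LinearMap.ker α := by
      apply iSup_le; intro j; apply iSup_le; intro hj x hx
      rw [hf, urn_mem_gen] at hx
      have h1 := hαA j q x
      rw [hx, dotProduct_zero] at h1
      rw [LinearMap.mem_ker, hα]
      rcases mul_eq_zero.1 h1.symm with h | h
      · exact absurd (sub_eq_zero.1 (pow_eq_zero_iff (by omega) |>.1 h)).symm hj
      · exact h
    have hgood : (⨆ j, ⨆ (_ : j ≠ (b : ℂ)), f.maxGenEigenspace j) ≤ urnGood f c hc lam2.re ν₂ := by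
      apply iSup_le; intro j; apply iSup_le; intro hj
      exact hne j hj
    have htop := (urn_isCompl A (b : ℂ)).sup_eq_top
    have hfin : Module.finrank ℂ (f.maxGenEigenspace (b : ℂ)) ≤ 1 := by
      rw [LinearMap.finrank_maxGenEigenspace_eq]
      have : LinearMap.charpoly f = A.charpoly := Matrix.charpoly_toLin' A
      rw [this]; omega
    obtain ⟨⟨w, hw⟩, hwspan⟩ := finrank_le_one_iff.1 hfin
    have hvtop : v ∈ f.maxGenEigenspace (b : ℂ) ⊔ (⨆ j, ⨆ (_ : j ≠ (b : ℂ)), f.maxGenEigenspace j) := by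
      rw [hf, htop]; trivial
    obtain ⟨x, hx, y, hy, rfl⟩ := Submodule.mem_sup.1 hvtop
    obtain ⟨t, ht⟩ := hwspan ⟨x, hx⟩
    have ht' : t • w = x := congrArg Subtype.val ht
    have hy0 : a ⬝ᵥ y = 0 := hker hy
    rw [dotProduct_add, hy0, add_zero, ← ht', dotProduct_smul, smul_eq_mul] at hv
    rcases mul_eq_zero.1 hv with h | h
    · rw [← ht', h, zero_smul, zero_add]
      exact hgood hy
    · exfalso
      have hbker : f.maxGenEigenspace (b : ℂ) ≤ LinearMap.ker α := by
        intro z hz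
        obtain ⟨s, hs⟩ := hwspan ⟨z, hz⟩
        have hs' : s • w = z := congrArg Subtype.val hs
        rw [LinearMap.mem_ker, hα, ← hs', dotProduct_smul, h, smul_zero]
      have : (⊤ : Submodule ℂ (Fin q → ℂ)) ≤ LinearMap.ker α := by
        rw [← htop]; exact sup_le hbker hker
      apply ha
      apply dotProduct_eq_zero
      intro z
      exact this (x := z) trivial


theorem urn_op_bound {q : ℕ} (A : Matrix (Fin q) (Fin q) ℝ) (a : Fin q → ℝ) (ha : a ≠ 0)
    (c : ℕ → ℝ) (hc : ∀ j, 0 < c j) (r : ℝ) (ν : ℕ)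
    (hgood : ∀ v : Fin q → ℂ, (fun j => (a j : ℂ)) ⬝ᵥ v = 0 →
      v ∈ urnGood (Matrix.toLinAlgEquiv' (A.map (fun x : ℝ => (x : ℂ)))) c hc r ν) :
    ∃ C : ℝ, 0 < C ∧ ∀ k m, ∀ v : EuclideanSpace ℝ (Fin q), ∑ j, a j * v j = 0 →
      ‖urnB (fun j => c j • Matrix.toEuclideanCLM (𝕜 := ℝ) A) k m v‖
        ≤ C * (Real.exp (r * urnT c k m) * (1 + urnT c k m) ^ ν) * ‖v‖ := by
  classical
  let Bm : ℕ → ℕ → Matrix (Fin q) (Fin q) ℝ := fun k m => urnB (fun j => c j • A) k m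
  have haa : a ⬝ᵥ a ≠ 0 := fun h => ha (dotProduct_self_eq_zero.1 h)
  let g : Fin q → Fin q → ℝ := fun i => Pi.single i 1 - (a i / (a ⬝ᵥ a)) • a
  have hg : ∀ i, a ⬝ᵥ g i = 0 := by
    intro i
    simp only [g, dotProduct_sub, dotProduct_smul, dotProduct_single, smul_eq_mul]
    field_simp
    ring
  have hvg : ∀ v : Fin q → ℝ, a ⬝ᵥ v = 0 → v = ∑ i, v i • g i := by
    intro v hv
    have h1 : ∑ i, v i * a i = 0 := by rw [← hv]; simp [dotProduct, mul_comm]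
    simp only [g, smul_sub, Finset.sum_sub_distrib, smul_smul, ← Finset.sum_smul]
    have h2 : ∑ i, v i * (a i / (a ⬝ᵥ a)) = 0 := by
      simp only [← mul_div_assoc]
      rw [← Finset.sum_div, h1, zero_div]
    rw [h2, zero_smul, sub_zero]
    funext j
    simp [Finset.sum_apply, Pi.single_apply]
  have hcomplex : ∀ k m (x : Fin q → ℝ),
      ‖(Bm k m).mulVec x‖ ≤ ‖urnB (fun j => (c j : ℂ)
        • (Matrix.toLinAlgEquiv' (A.map (fun x : ℝ => (x : ℂ))) : Module.End ℂ (Fin q → ℂ))) k m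
          (fun i => (x i : ℂ))‖ := by
    intro k m x
    have e1 : (Complex.ofRealHom.mapMatrix (Bm k m) : Matrix (Fin q) (Fin q) ℂ)
        = urnB (fun j => (c j : ℂ) • A.map (fun x : ℝ => (x : ℂ))) k m := by
      rw [urnB_map]
      congr 1
      funext j
      ext i l
      simp
    have e2 : urnB (fun j => (c j : ℂ)
        • (Matrix.toLinAlgEquiv' (A.map (fun x : ℝ => (x : ℂ))) : Module.End ℂ (Fin q → ℂ))) k m
        = Matrix.toLinAlgEquiv' (Complex.ofRealHom.mapMatrix (Bm k m)) := by
      rw [e1]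
      have := urnB_map (RingHomClass.toRingHom (Matrix.toLinAlgEquiv' (R := ℂ) (n := Fin q)))
        (fun j => (c j : ℂ) • A.map (fun x : ℝ => (x : ℂ))) k m
      have h : (fun j => (c j : ℂ) • (Matrix.toLinAlgEquiv' (A.map (fun x : ℝ => (x : ℂ))) :
          Module.End ℂ (Fin q → ℂ)))
          = fun j => Matrix.toLinAlgEquiv' ((c j : ℂ) • A.map (fun x : ℝ => (x : ℂ))) := by
        funext j
        exact (map_smul Matrix.toLinAlgEquiv' _ _).symm
      rw [h]
      exact this.symm
    rw [e2, Matrix.toLinAlgEquiv'_apply]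
    rw [pi_norm_le_iff_of_nonneg (norm_nonneg _)]
    intro i
    refine le_trans (le_of_eq ?_) (norm_le_pi_norm _ i)
    have := RingHom.map_mulVec Complex.ofRealHom (Bm k m) x i
    have h2 : (Complex.ofRealHom.mapMatrix (Bm k m)).mulVec (fun i => (x i : ℂ)) i
      = Complex.ofRealHom ((Bm k m).mulVec x i) := this.symm
    rw [h2]
    simp
  have heuc : ∀ k m (v : EuclideanSpace ℝ (Fin q)),
      urnB (fun j => c j • Matrix.toEuclideanCLM (𝕜 := ℝ) A) k m v
        = WithLp.toLp 2 ((Bm k m).mulVec (WithLp.ofLp v)) := by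
    intro k m v
    have := urnB_map (RingHomClass.toRingHom (Matrix.toEuclideanCLM (𝕜 := ℝ) (n := Fin q)))
        (fun j => c j • A) k m
    have h2 : urnB (fun j => c j • Matrix.toEuclideanCLM (𝕜 := ℝ) A) k m
        = Matrix.toEuclideanCLM (𝕜 := ℝ) (Bm k m) := by
      simpa using this.symm
    rw [h2]
    rfl
  let Λ : (Fin q → ℝ) →L[ℝ] EuclideanSpace ℝ (Fin q) :=
    ((PiLp.continuousLinearEquiv 2 ℝ (fun _ : Fin q => ℝ)).symm : (Fin q → ℝ) →L[ℝ] _)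
  have hΛ : ∀ x : Fin q → ℝ, ‖(WithLp.toLp 2 x : EuclideanSpace ℝ (Fin q))‖ ≤ ‖Λ‖ * ‖x‖ :=
    fun x => Λ.le_opNorm x
  have hgi : ∀ i, ∃ C : ℝ, 0 ≤ C ∧ ∀ k m, ‖(Bm k m).mulVec (g i)‖
      ≤ C * (Real.exp (r * urnT c k m) * (1 + urnT c k m) ^ ν) := by
    intro i
    obtain ⟨C, hC, hb⟩ := hgood (fun j => (g i j : ℂ)) (by
      have := hg i
      simp only [dotProduct] at this ⊢
      exact_mod_cast this)
    exact ⟨C, hC, fun k m => (hcomplex k m (g i)).trans (hb k m)⟩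
  choose Ci hCi hCib using hgi
  refine ⟨‖Λ‖ * ∑ i, Ci i + 1, by
    have : 0 ≤ ∑ i, Ci i := Finset.sum_nonneg fun i _ => hCi i
    positivity, fun k m v hv => ?_⟩
  have hT := urnT_nonneg c hc k m
  set φ := Real.exp (r * urnT c k m) * (1 + urnT c k m) ^ ν with hφ
  have hφ0 : 0 ≤ φ := by positivity
  rw [heuc]
  have h1 : ‖(Bm k m).mulVec (WithLp.ofLp v)‖ ≤ (∑ i, Ci i) * φ * ‖v‖ := by
    conv_lhs => rw [hvg (WithLp.ofLp v) hv]
    rw [← Matrix.mulVecLin_apply, map_sum]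
    refine (norm_sum_le _ _).trans ?_
    rw [Finset.sum_mul, Finset.sum_mul]
    apply Finset.sum_le_sum
    intro i _
    rw [map_smul, norm_smul, Matrix.mulVecLin_apply]
    have h2 : ‖WithLp.ofLp v i‖ ≤ ‖v‖ := PiLp.norm_apply_le v i
    calc _ ≤ ‖v‖ * (Ci i * φ) := by
          gcongr
          exact hCib i k m
      _ = _ := by ring
  calc _ ≤ ‖Λ‖ * ((∑ i, Ci i) * φ * ‖v‖) := (hΛ _).trans (by gcongr)
    _ = (‖Λ‖ * ∑ i, Ci i) * φ * ‖v‖ := by ring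
    _ ≤ _ := by
      gcongr
      linarith


theorem urn_sq_sum (w b : ℝ) (hw : 0 < w) (hb : 0 < b) (k m : ℕ) :
    urnT (fun j => ((w + (j : ℝ) * b)⁻¹) ^ 2) k m ≤ ((1 + b / w) / b) * w⁻¹ := by
  have hpos : ∀ j : ℕ, 0 < w + (j : ℝ) * b := fun j => by positivity
  have h1 : ∀ j : ℕ, ((w + (j : ℝ) * b)⁻¹) ^ 2
      ≤ ((1 + b / w) / b) * ((w + (j : ℝ) * b)⁻¹ - (w + ((j + 1 : ℕ) : ℝ) * b)⁻¹) := by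
    intro j
    have hj := hpos j
    have hj1 := hpos (j + 1)
    push_cast at hj1 ⊢
    have e : ((1 + b / w) / b) * ((w + (j : ℝ) * b)⁻¹ - (w + ((j : ℝ) + 1) * b)⁻¹)
        = (1 + b / w) * ((w + (j : ℝ) * b)⁻¹ * (w + ((j : ℝ) + 1) * b)⁻¹) := by
      field_simp; ring
    rw [e, pow_two, mul_left_comm]
    gcongr
    rw [← div_eq_mul_inv, inv_eq_one_div, div_le_div_iff₀ hj hj1]
    have : w * (b / w) = b := by field_simp
    have h2 : 0 ≤ (j : ℝ) * b * (b / w) := by positivity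
    nlinarith
  have h2 : urnT (fun j => ((w + (j : ℝ) * b)⁻¹) ^ 2) k m
      ≤ ((1 + b / w) / b) * ((w + (k : ℝ) * b)⁻¹ - (w + ((k + m : ℕ) : ℝ) * b)⁻¹) := by
    induction m with
    | zero => simp [urnT]
    | succ m ih =>
      rw [urnT_succ]
      have := h1 (k + m)
      rw [mul_sub] at this ih ⊢
      have e : k + (m + 1) = k + m + 1 := by ring
      rw [e]
      linarith
  refine h2.trans ?_
  gcongr
  have h3 : (w + (k : ℝ) * b)⁻¹ ≤ w⁻¹ := by
    apply inv_anti₀ hw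
    have : 0 ≤ (k : ℝ) * b := by positivity
    linarith
  have h4 : 0 < (w + ((k + m : ℕ) : ℝ) * b)⁻¹ := inv_pos.2 (hpos _)
  linarith

theorem urn_T_le (w b : ℝ) (hw : 0 < w) (hb : 0 < b) (k m : ℕ) :
    urnT (fun j => (w + (j : ℝ) * b)⁻¹) (k + 1) m
      ≤ (1 / b) * (Real.log (w + ((k + m : ℕ) : ℝ) * b) - Real.log (w + (k : ℝ) * b)) := by
  have hpos : ∀ j : ℕ, 0 < w + (j : ℝ) * b := fun j => by positivity
  induction m with
  | zero => simp [urnT]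
  | succ m ih =>
    rw [urnT_succ]
    have h1 := hpos (k + m)
    have h2 := hpos (k + m + 1)
    have h3 := Real.log_le_sub_one_of_pos (div_pos h1 h2)
    rw [Real.log_div h1.ne' h2.ne'] at h3
    have h4 : (w + ((k + m : ℕ) : ℝ) * b) / (w + ((k + m + 1 : ℕ) : ℝ) * b) - 1
        = -(b * (w + ((k + m + 1 : ℕ) : ℝ) * b)⁻¹) := by
      rw [div_sub_one h2.ne', div_eq_mul_inv]
      push_cast; ring
    rw [h4] at h3
    have h5 : (w + ((k + m + 1 : ℕ) : ℝ) * b)⁻¹ ≤ (1 / b)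
        * (Real.log (w + ((k + m + 1 : ℕ) : ℝ) * b) - Real.log (w + ((k + m : ℕ) : ℝ) * b)) := by
      rw [one_div, ← div_eq_inv_mul, le_div_iff₀ hb]
      linarith
    have e : k + 1 + m = k + m + 1 := by ring
    have e' : k + (m + 1) = k + m + 1 := by ring
    rw [e, e']
    rw [mul_sub] at ih h5 ⊢
    linarith

theorem urn_T_le' (w b : ℝ) (hw : 0 < w) (hb : 0 < b) :
    ∃ κ : ℝ, 1 ≤ κ ∧ ∀ n k : ℕ, k < n →
      urnT (fun j => (w + (j : ℝ) * b)⁻¹) (k + 1) (n - (k + 1))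
        ≤ (1 / b) * Real.log (κ * ((n : ℝ) / ((k : ℝ) + 1))) := by
  have hmin : 0 < min w b := lt_min hw hb
  refine ⟨(w + b) / min w b, ?_, ?_⟩
  · rw [one_le_div hmin]
    have := min_le_left w b
    linarith
  intro n k hkn
  refine (urn_T_le w b hw hb k _).trans ?_
  have e : k + (n - (k + 1)) = n - 1 := by omega
  have hn : (1 : ℝ) ≤ n := by
    have : 1 ≤ n := by omega
    exact_mod_cast this
  rw [e, ← Real.log_div (by positivity) (by positivity)]
  have h1 : w + ((n - 1 : ℕ) : ℝ) * b ≤ (w + b) * n := by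
    have : ((n - 1 : ℕ) : ℝ) ≤ n := by exact_mod_cast Nat.sub_le n 1
    nlinarith
  have h2 : min w b * ((k : ℝ) + 1) ≤ w + (k : ℝ) * b := by
    have := min_le_left w b
    have := min_le_right w b
    have : (k : ℝ) * min w b ≤ k * b := by gcongr
    linarith
  gcongr
  calc (w + ((n - 1 : ℕ) : ℝ) * b) / (w + (k : ℝ) * b)
      ≤ ((w + b) * n) / (min w b * ((k : ℝ) + 1)) := by gcongr
    _ = _ := by field_simp

theorem urn_log_two_lt {n : ℕ} (hn : 2 ≤ n) : (1 / 2 : ℝ) ≤ Real.log n := by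
  have h1 := Real.log_two_gt_d9
  have h2 : Real.log 2 ≤ Real.log n := by
    apply Real.log_le_log (by norm_num)
    exact_mod_cast hn
  linarith

/-- Bound on the growth factors. -/
theorem urn_phi_bound (w b : ℝ) (hw : 0 < w) (hb : 0 < b) (r : ℝ) (hr : 0 ≤ r) (ν : ℕ) :
    ∃ C : ℝ, 0 ≤ C ∧ ∀ n k : ℕ, 2 ≤ n → k < n →
      (Real.exp (r * urnT (fun j => (w + (j : ℝ) * b)⁻¹) (k + 1) (n - (k + 1)))
        * (1 + urnT (fun j => (w + (j : ℝ) * b)⁻¹) (k + 1) (n - (k + 1))) ^ ν) ^ 2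
      ≤ C * ((Real.log n ^ ν) ^ 2 * ((n : ℝ) / ((k : ℝ) + 1)) ^ (2 * (r / b))) := by
  obtain ⟨κ, hκ, hT⟩ := urn_T_le' w b hw hb
  set D : ℝ := 2 * (1 + Real.log κ / b) + 1 / b with hD
  have hlogκ : 0 ≤ Real.log κ := Real.log_nonneg hκ
  refine ⟨(κ ^ (r / b) * D ^ ν) ^ 2, by positivity, fun n k hn hk => ?_⟩
  have hTk := hT n k hk
  have hTn := urnT_nonneg (fun j => (w + (j : ℝ) * b)⁻¹) (fun j => by positivity) (k + 1) (n - (k + 1))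
  set T := urnT (fun j => (w + (j : ℝ) * b)⁻¹) (k + 1) (n - (k + 1))
  have hnpos : (0 : ℝ) < n := by
    have : 0 < n := by omega
    exact_mod_cast this
  have hx : 0 < (n : ℝ) / ((k : ℝ) + 1) := by positivity
  have h1 : Real.exp (r * T) ≤ κ ^ (r / b) * ((n : ℝ) / ((k : ℝ) + 1)) ^ (r / b) := by
    rw [← Real.mul_rpow (by linarith) hx.le, Real.rpow_def_of_pos (by positivity)]
    apply Real.exp_le_exp.2
    calc r * T ≤ r * ((1 / b) * Real.log (κ * ((n : ℝ) / ((k : ℝ) + 1)))) := by gcongr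
      _ = _ := by ring
  have hlog := urn_log_two_lt hn
  have h2 : 1 + T ≤ D * Real.log n := by
    have h3 : Real.log (κ * ((n : ℝ) / ((k : ℝ) + 1))) ≤ Real.log κ + Real.log n := by
      rw [← Real.log_mul (by linarith) hnpos.ne']
      apply Real.log_le_log (by positivity)
      gcongr
      apply div_le_self hnpos.le
      have : (0 : ℝ) ≤ k := by positivity
      linarith
    have h4 : T ≤ (1 / b) * (Real.log κ + Real.log n) := hTk.trans (by gcongr)
    have h5 : 0 ≤ 1 + Real.log κ / b := by positivity
    have h6 : (1 / b) * (Real.log κ + Real.log n) = Real.log κ / b + (1 / b) * Real.log n := by ring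
    rw [hD]
    nlinarith
  have hxx : ((n : ℝ) / ((k : ℝ) + 1)) ^ (2 * (r / b)) = (((n : ℝ) / ((k : ℝ) + 1)) ^ (r / b)) ^ 2 := by
    rw [mul_comm, Real.rpow_mul hx.le]
    norm_cast
  rw [hxx, ← mul_pow, ← mul_pow]
  gcongr ?_ ^ 2
  calc Real.exp (r * T) * (1 + T) ^ ν
      ≤ (κ ^ (r / b) * ((n : ℝ) / ((k : ℝ) + 1)) ^ (r / b)) * (D * Real.log n) ^ ν := by gcongr
    _ = _ := by rw [mul_pow]; ring

theorem urn_sum_lt (s : ℝ) (hs1 : s < 1) (hs0 : 0 ≤ s) (n : ℕ) :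
    ∑ k ∈ Finset.range n, ((n : ℝ) / ((k : ℝ) + 1)) ^ s ≤ (1 - s)⁻¹ * n := by
  have key : ∀ m : ℕ, ∑ k ∈ Finset.range m, ((k : ℝ) + 1) ^ (-s) ≤ (1 - s)⁻¹ * (m : ℝ) ^ (1 - s) := by
    intro m
    induction m with
    | zero => simp [Real.zero_rpow (by linarith : 1 - s ≠ 0)]
    | succ m ih =>
      rw [Finset.sum_range_succ]
      have hm : (0 : ℝ) < (m : ℝ) + 1 := by positivity
      have h1 : (m : ℝ) = ((m : ℝ) + 1) * (1 + -(1 / ((m : ℝ) + 1))) := by field_simp; ring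
      have hle1 : 1 / ((m : ℝ) + 1) ≤ 1 := by
        rw [div_le_one hm]
        have : (0 : ℝ) ≤ m := by positivity
        linarith
      have h2 : (1 + -(1 / ((m : ℝ) + 1))) ^ (1 - s) ≤ 1 + (1 - s) * -(1 / ((m : ℝ) + 1)) :=
        rpow_one_add_le_one_add_mul_self (by linarith) (by linarith) (by linarith)
      have h3 : (m : ℝ) ^ (1 - s) ≤ ((m : ℝ) + 1) ^ (1 - s) * (1 + (1 - s) * -(1 / ((m : ℝ) + 1))) := by
        calc (m : ℝ) ^ (1 - s) = (((m : ℝ) + 1) * (1 + -(1 / ((m : ℝ) + 1)))) ^ (1 - s) := by rw [← h1]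
          _ = ((m : ℝ) + 1) ^ (1 - s) * (1 + -(1 / ((m : ℝ) + 1))) ^ (1 - s) :=
            Real.mul_rpow hm.le (by linarith)
          _ ≤ _ := by gcongr
      have h4 : ((m : ℝ) + 1) ^ (1 - s) = ((m : ℝ) + 1) ^ (-s) * ((m : ℝ) + 1) := by
        rw [← Real.rpow_add_one hm.ne']; congr 1; ring
      have h5 : (m : ℝ) ^ (1 - s) ≤ ((m : ℝ) + 1) ^ (1 - s) - (1 - s) * ((m : ℝ) + 1) ^ (-s) := by
        refine h3.trans (le_of_eq ?_)
        rw [h4]; field_simp; ring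
      have h6 : (1 - s)⁻¹ * (m : ℝ) ^ (1 - s)
          ≤ (1 - s)⁻¹ * (((m : ℝ) + 1) ^ (1 - s) - (1 - s) * ((m : ℝ) + 1) ^ (-s)) := by
        gcongr
      have h7 : (1 - s)⁻¹ * ((1 - s) * ((m : ℝ) + 1) ^ (-s)) = ((m : ℝ) + 1) ^ (-s) := by
        rw [← mul_assoc, inv_mul_cancel₀ (by linarith), one_mul]
      push_cast
      rw [mul_sub, h7] at h6
      linarith
  rcases Nat.eq_zero_or_pos n with rfl | hn
  · simp
  have hn' : (0 : ℝ) < n := by exact_mod_cast hn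
  have e : ∀ k ∈ Finset.range n, ((n : ℝ) / ((k : ℝ) + 1)) ^ s = (n : ℝ) ^ s * ((k : ℝ) + 1) ^ (-s) := by
    intro k _
    rw [Real.div_rpow hn'.le (by positivity), Real.rpow_neg (by positivity), div_eq_mul_inv]
  rw [Finset.sum_congr rfl e, ← Finset.mul_sum]
  calc (n : ℝ) ^ s * ∑ k ∈ Finset.range n, ((k : ℝ) + 1) ^ (-s)
      ≤ (n : ℝ) ^ s * ((1 - s)⁻¹ * (n : ℝ) ^ (1 - s)) := by gcongr; exact key n
    _ = (1 - s)⁻¹ * ((n : ℝ) ^ s * (n : ℝ) ^ (1 - s)) := by ring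
    _ = (1 - s)⁻¹ * n := by rw [← Real.rpow_add hn']; simp

theorem urn_sum_eq (n : ℕ) (hn : 2 ≤ n) :
    ∑ k ∈ Finset.range n, ((n : ℝ) / ((k : ℝ) + 1)) ^ (1 : ℝ) ≤ 3 * (n * Real.log n) := by
  have h := harmonic_le_one_add_log n
  have hlog := urn_log_two_lt hn
  have e : ∑ k ∈ Finset.range n, ((n : ℝ) / ((k : ℝ) + 1)) ^ (1 : ℝ) = n * (harmonic n : ℝ) := by
    rw [harmonic, Rat.cast_sum, Finset.mul_sum]
    apply Finset.sum_congr rfl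
    intro k _
    rw [Real.rpow_one]; push_cast; rw [div_eq_mul_inv]
  rw [e]
  calc (n : ℝ) * (harmonic n : ℝ) ≤ n * (3 * Real.log n) := by
        gcongr; linarith
    _ = _ := by ring

theorem urn_sum_gt (s : ℝ) (hs1 : 1 < s) : ∃ C : ℝ, 0 ≤ C ∧ ∀ n : ℕ,
    ∑ k ∈ Finset.range n, ((n : ℝ) / ((k : ℝ) + 1)) ^ s ≤ C * (n : ℝ) ^ s := by
  have hsum : Summable (fun k : ℕ => (((k : ℝ) + 1) ^ s)⁻¹) := by
    have := (summable_nat_add_iff 1).2 (Real.summable_nat_rpow_inv.2 hs1)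
    simpa using this
  refine ⟨∑' k : ℕ, (((k : ℝ) + 1) ^ s)⁻¹, tsum_nonneg fun k => by positivity, fun n => ?_⟩
  have e : ∀ k ∈ Finset.range n, ((n : ℝ) / ((k : ℝ) + 1)) ^ s = (((k : ℝ) + 1) ^ s)⁻¹ * (n : ℝ) ^ s := by
    intro k _
    rw [Real.div_rpow (by positivity) (by positivity), div_eq_mul_inv, mul_comm]
  rw [Finset.sum_congr rfl e, ← Finset.sum_mul]
  gcongr
  exact hsum.sum_le_tsum _ (fun k _ => by positivity)

theorem urn_finish (C1 C g S G : ℝ) (hC1 : 0 ≤ C1) (hC : 0 ≤ C) (hg : 0 < g) (hgG : g ≤ G)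
    (hS : S ≤ C * G ^ 2) :
    (1 + C1 * S) ^ (1 / 2 : ℝ) ≤ Real.sqrt (1 / g ^ 2 + C1 * C) * G := by
  rw [← Real.sqrt_eq_rpow]
  have hG : 0 < G := lt_of_lt_of_le hg hgG
  have hGs : Real.sqrt (1 / g ^ 2 + C1 * C) * G = Real.sqrt ((1 / g ^ 2 + C1 * C) * G ^ 2) := by
    rw [Real.sqrt_mul (by positivity), Real.sqrt_sq hG.le]
  rw [hGs]
  apply Real.sqrt_le_sqrt
  have h1 : 1 ≤ 1 / g ^ 2 * G ^ 2 := by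
    rw [one_div, ← div_eq_inv_mul, one_le_div (by positivity)]
    gcongr
  have h2 : C1 * S ≤ C1 * (C * G ^ 2) := by gcongr
  linarith


theorem urn_moment {Ω E : Type*} {m0 : MeasurableSpace Ω} {μ : Measure Ω}
    [IsProbabilityMeasure μ]
    [NormedAddCommGroup E] [InnerProductSpace ℝ E] (p : ℝ) (hp : 2 ≤ p)
    (w b : ℝ) (hw : 0 < w) (hb : 0 < b) (L : E →L[ℝ] E) (X : ℕ → Ω → E)
    (hXint : ∀ n, Integrable (X n) μ) (x₀ : E) (hX0 : X 0 = fun _ => x₀)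
    (hmom : (⨆ n : ℕ, eLpNorm (fun ω => X (n + 1) ω - X n ω) (ENNReal.ofReal p) μ) < ⊤) :
    (∀ n, MemLp (X n) (ENNReal.ofReal p) μ) ∧ ∃ K : ℝ, 0 < K ∧ ∀ n : ℕ,
      eLpNorm (fun ω => X (n + 1) ω - X n ω - (w + (n : ℝ) * b)⁻¹ • L (X n ω)) (ENNReal.ofReal p) μ
      ≤ ENNReal.ofReal K := by
  have hp1 : (1 : ENNReal) ≤ ENNReal.ofReal p := by
    rw [← ENNReal.ofReal_one]; exact ENNReal.ofReal_le_ofReal (by linarith)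
  obtain ⟨K0, hK0, hK0e⟩ : ∃ K0 : ℝ, 0 ≤ K0 ∧ ∀ n : ℕ,
      eLpNorm (fun ω => X (n + 1) ω - X n ω) (ENNReal.ofReal p) μ ≤ ENNReal.ofReal K0 := by
    refine ⟨(⨆ n : ℕ, eLpNorm (fun ω => X (n + 1) ω - X n ω) (ENNReal.ofReal p) μ).toReal,
      ENNReal.toReal_nonneg, fun n => ?_⟩
    rw [ENNReal.ofReal_toReal hmom.ne]
    exact le_iSup (fun n : ℕ => eLpNorm (fun ω => X (n + 1) ω - X n ω) (ENNReal.ofReal p) μ) n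
  have hDm : ∀ n, AEStronglyMeasurable (fun ω => X (n + 1) ω - X n ω) μ := fun n =>
    ((hXint (n + 1)).sub (hXint n)).aestronglyMeasurable
  have hXb : ∀ n : ℕ, eLpNorm (X n) (ENNReal.ofReal p) μ ≤ ENNReal.ofReal (‖x₀‖ + n * K0) := by
    intro n
    induction n with
    | zero =>
      rw [hX0, eLpNorm_const _ (by positivity) (IsProbabilityMeasure.ne_zero μ)]
      simp
    | succ n ih =>
      have e : X (n + 1) = X n + fun ω => X (n + 1) ω - X n ω := by
        funext ω; simp
      rw [e]
      refine (eLpNorm_add_le (hXint n).aestronglyMeasurable (hDm n) hp1).trans ?_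
      refine (add_le_add ih (hK0e n)).trans ?_
      rw [← ENNReal.ofReal_add (by positivity) hK0]
      apply ENNReal.ofReal_le_ofReal
      push_cast
      linarith
  refine ⟨fun n => ⟨(hXint n).aestronglyMeasurable, (hXb n).trans_lt ENNReal.ofReal_lt_top⟩,
    K0 + ‖L‖ * (‖x₀‖ / w + K0 / b) + 1, by positivity, fun n => ?_⟩
  have hpos : 0 < w + (n : ℝ) * b := by positivity
  have hLm : AEStronglyMeasurable (fun ω => (w + (n : ℝ) * b)⁻¹ • L (X n ω)) μ :=
    ((L.integrable_comp (hXint n)).smul _).aestronglyMeasurable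
  refine (eLpNorm_sub_le (hDm n) hLm hp1).trans ?_
  have h1 : eLpNorm (fun ω => (w + (n : ℝ) * b)⁻¹ • L (X n ω)) (ENNReal.ofReal p) μ
      ≤ ENNReal.ofReal ((w + (n : ℝ) * b)⁻¹ * ‖L‖ * (‖x₀‖ + n * K0)) := by
    have h2 := eLpNorm_le_mul_eLpNorm_of_ae_le_mul (μ := μ)
      (f := fun ω => (w + (n : ℝ) * b)⁻¹ • L (X n ω)) (g := X n)
      (c := (w + (n : ℝ) * b)⁻¹ * ‖L‖) (by
        refine Filter.Eventually.of_forall fun ω => ?_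
        rw [norm_smul, Real.norm_of_nonneg (by positivity), mul_assoc]
        gcongr
        exact L.le_opNorm _) (ENNReal.ofReal p)
    refine h2.trans ?_
    rw [ENNReal.ofReal_mul (p := (w + (n : ℝ) * b)⁻¹ * ‖L‖) (by positivity)]
    gcongr
    exact hXb n
  refine (add_le_add (hK0e n) h1).trans ?_
  rw [← ENNReal.ofReal_add hK0 (by positivity)]
  apply ENNReal.ofReal_le_ofReal
  have h3 : (w + (n : ℝ) * b)⁻¹ * (‖x₀‖ + n * K0) ≤ ‖x₀‖ / w + K0 / b := by
    rw [← div_eq_inv_mul, add_div]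
    apply add_le_add
    · have : 0 ≤ (n : ℝ) * b := by positivity
      gcongr
      linarith
    · rw [div_le_div_iff₀ hpos hb]
      have : 0 ≤ K0 * w := by positivity
      linarith
  have h4 : (w + (n : ℝ) * b)⁻¹ * ‖L‖ * (‖x₀‖ + n * K0)
      = ‖L‖ * ((w + (n : ℝ) * b)⁻¹ * (‖x₀‖ + n * K0)) := by ring
  rw [h4]
  have h5 : ‖L‖ * ((w + (n : ℝ) * b)⁻¹ * (‖x₀‖ + n * K0)) ≤ ‖L‖ * (‖x₀‖ / w + K0 / b) := by
    gcongr
  linarith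

theorem urn_sum_phi (w b : ℝ) (hw : 0 < w) (hb : 0 < b) (r : ℝ) (hr : 0 ≤ r) (ν : ℕ) (C0 : ℝ) :
    ∃ C : ℝ, 0 ≤ C ∧ ∀ n : ℕ, 2 ≤ n → ∑ k ∈ Finset.range n,
      (C0 * (Real.exp (r * urnT (fun j => (w + (j : ℝ) * b)⁻¹) (k + 1) (n - (k + 1)))
        * (1 + urnT (fun j => (w + (j : ℝ) * b)⁻¹) (k + 1) (n - (k + 1))) ^ ν)) ^ 2
      ≤ C * ((Real.log n ^ ν) ^ 2
        * ∑ k ∈ Finset.range n, ((n : ℝ) / ((k : ℝ) + 1)) ^ (2 * (r / b))) := by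
  obtain ⟨C, hC, h⟩ := urn_phi_bound w b hw hb r hr ν
  refine ⟨C0 ^ 2 * C, by positivity, fun n hn => ?_⟩
  rw [Finset.mul_sum, Finset.mul_sum]
  apply Finset.sum_le_sum
  intro k hk
  rw [mul_pow, mul_assoc]
  gcongr
  exact h n k hn (Finset.mem_range.1 hk)

/-- Under the Pólya urn hypotheses, let p ≥ 2 and assume
sup_n ‖X_{n+1} − X_n‖_p < ∞. List the eigenvalues λ₁, …, λ_q of A with algebraic
multiplicity, ordered with decreasing real parts and, among eigenvalues of equal real
part, by decreasing ν_λ; assume λ₁ = b. (Below, `lam2` is the second eigenvalue λ₂ of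
this listing: it is a candidate for λ₂, has maximal real part among all candidates, and
maximal nilpotency index among the candidates of the same real part.) Then there is a
constant C (depending on the data and p but not on n) such that for every n ≥ 2:
‖X_n − E X_n‖_p ≤ C n^{1/2}                        if Re λ₂ < b/2;
‖X_n − E X_n‖_p ≤ C n^{1/2} (log n)^{ν_{λ₂} + 1/2} if Re λ₂ = b/2;
‖X_n − E X_n‖_p ≤ C n^{Re λ₂ / b} (log n)^{ν_{λ₂}} if Re λ₂ > b/2. -/
theorem urn_centered_Lp_bound
    (q : ℕ) (hq : 2 ≤ q) {Ω : Type} {m0 : MeasurableSpace Ω}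
    (μ : Measure Ω) [IsProbabilityMeasure μ] (ℱ : Filtration ℕ m0)
    (a : Fin q → ℝ) (b : ℝ) (hb : 0 < b)
    (A : Matrix (Fin q) (Fin q) ℝ) (hA : Matrix.vecMul a A = b • a)
    (X : ℕ → Ω → EuclideanSpace ℝ (Fin q)) (hadp : Adapted ℱ X)
    (hXint : ∀ n, Integrable (X n) μ)
    (x₀ : EuclideanSpace ℝ (Fin q)) (hX0 : X 0 = fun _ => x₀)
    (hw₀ : 0 < ∑ j, a j * x₀ j)
    (hwn : ∀ n : ℕ, ∀ᵐ ω ∂μ, ∑ j, a j * X n ω j = (∑ j, a j * x₀ j) + (n : ℝ) * b)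
    (hcond : ∀ n : ℕ, μ[fun ω => X (n + 1) ω - X n ω | ℱ n] =ᵐ[μ]
      fun ω => ((∑ j, a j * x₀ j) + (n : ℝ) * b)⁻¹ • (Matrix.toEuclideanCLM (𝕜 := ℝ) A (X n ω)))
    (p : ℝ) (hp : 2 ≤ p)
    (hmom : (⨆ n : ℕ, eLpNorm (fun ω => X (n + 1) ω - X n ω) (ENNReal.ofReal p) μ) < ⊤)
    (hspec : (b : ℂ) ∈ spectrum ℂ (A.map (fun x : ℝ => (x : ℂ))))
    (hmax : ∀ mu ∈ spectrum ℂ (A.map (fun x : ℝ => (x : ℂ))), mu.re ≤ b)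
    (lam2 : ℂ) (hlam2 : MemSecondEigSet (A.map (fun x : ℝ => (x : ℂ))) b lam2)
    (h2max : ∀ mu : ℂ, MemSecondEigSet (A.map (fun x : ℝ => (x : ℂ))) b mu → mu.re ≤ lam2.re)
    (P2 : Matrix (Fin q) (Fin q) ℂ)
    (hP2 : IsSpectralProj (A.map (fun x : ℝ => (x : ℂ))) lam2 P2)
    (ν₂ : ℕ) (hν2 : NilIndexOf (A.map (fun x : ℝ => (x : ℂ))) lam2 P2 ν₂)
    (hν2max : ∀ (mu : ℂ) (P' : Matrix (Fin q) (Fin q) ℂ) (ν' : ℕ),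
      MemSecondEigSet (A.map (fun x : ℝ => (x : ℂ))) b mu → mu.re = lam2.re →
      IsSpectralProj (A.map (fun x : ℝ => (x : ℂ))) mu P' →
      NilIndexOf (A.map (fun x : ℝ => (x : ℂ))) mu P' ν' → ν' ≤ ν₂) :
    ∃ C : ℝ, ∀ n : ℕ, 2 ≤ n →
      (lam2.re < b / 2 →
        eLpNorm (fun ω => X n ω - ∫ ω', X n ω' ∂μ) (ENNReal.ofReal p) μ
          ≤ ENNReal.ofReal (C * (n : ℝ) ^ (1 / 2 : ℝ))) ∧
      (lam2.re = b / 2 →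
        eLpNorm (fun ω => X n ω - ∫ ω', X n ω' ∂μ) (ENNReal.ofReal p) μ
          ≤ ENNReal.ofReal (C * (n : ℝ) ^ (1 / 2 : ℝ) * Real.log n ^ ((ν₂ : ℝ) + 1 / 2))) ∧
      (b / 2 < lam2.re →
        eLpNorm (fun ω => X n ω - ∫ ω', X n ω' ∂μ) (ENNReal.ofReal p) μ
          ≤ ENNReal.ofReal (C * (n : ℝ) ^ (lam2.re / b) * Real.log n ^ ν₂)) := by
  classical
  set w : ℝ := ∑ j, a j * x₀ j with hw
  set L := Matrix.toEuclideanCLM (𝕜 := ℝ) A with hL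
  let c : ℕ → ℝ := fun j => (w + (j : ℝ) * b)⁻¹
  have hc : ∀ j, 0 < c j := fun j => by
    have : 0 < w + (j : ℝ) * b := by positivity
    exact inv_pos.2 this
  have hcb : ∀ j, c j ≤ w⁻¹ := fun j => by
    apply inv_anti₀ hw₀
    have : 0 ≤ (j : ℝ) * b := by positivity
    linarith
  have ha : a ≠ 0 := by
    rintro rfl
    simp [hw] at hw₀
  have hac : (fun j => (a j : ℂ)) ≠ 0 := by
    intro h
    apply ha
    funext j
    have := congrFun h j
    simpa using this
  have hAc : Matrix.vecMul (fun j => (a j : ℂ)) (A.map (fun x : ℝ => (x : ℂ)))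
      = (b : ℂ) • (fun j => (a j : ℂ)) := by
    funext i
    have h1 := congrFun hA i
    simp only [Matrix.vecMul, dotProduct, Pi.smul_apply, smul_eq_mul, Matrix.map_apply] at h1 ⊢
    exact_mod_cast h1
  obtain ⟨C0, hC0, hop⟩ := urn_op_bound A a ha c hc lam2.re ν₂
    (urn_kernel_good (by omega) _ b _ hac hAc c hc w⁻¹ hcb _ (urn_sq_sum w b hw₀ hb)
      lam2 h2max ν₂ hν2max)
  obtain ⟨hmem, K, hK, hD⟩ := urn_moment p hp w b hw₀ hb L X hXint x₀ hX0 hmom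
  let ℓ : EuclideanSpace ℝ (Fin q) →ₗ[ℝ] ℝ :=
    { toFun := fun v => ∑ j, a j * v j
      map_add' := fun u v => by simp [mul_add, Finset.sum_add_distrib]
      map_smul' := fun t v => by
        simp only [PiLp.smul_apply, smul_eq_mul, RingHom.id_apply, Finset.mul_sum]
        exact Finset.sum_congr rfl fun j _ => by ring }
  have hℓ : ∀ v, ℓ v = ∑ j, a j * v j := fun v => rfl
  have hℓL : ∀ v, ℓ (L v) = b * ℓ v := by
    intro v
    have h1 : ℓ (L v) = a ⬝ᵥ A.mulVec (WithLp.ofLp v) := rfl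
    have h2 : ℓ v = a ⬝ᵥ (WithLp.ofLp v) := rfl
    rw [h1, h2, Matrix.dotProduct_mulVec, hA, smul_dotProduct, smul_eq_mul]
  have hW : ∀ n, ∀ᵐ ω ∂μ, X (n + 1) ω - X n ω - c n • L (X n ω) ∈ LinearMap.ker ℓ := by
    intro n
    filter_upwards [hwn n, hwn (n + 1)] with ω h1 h2
    have hpos : 0 < w + (n : ℝ) * b := by positivity
    rw [LinearMap.mem_ker, map_sub, map_sub, map_smul, hℓL, hℓ, hℓ, h1, h2, smul_eq_mul]
    simp only [c]
    push_cast
    field_simp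
    ring
  have hmain : ∀ (r : ℝ) (ν : ℕ) (C' : ℝ), 0 ≤ r → 0 < C' →
      (∀ k m, ∀ v : EuclideanSpace ℝ (Fin q), ∑ j, a j * v j = 0 →
        ‖urnB (fun j => c j • L) k m v‖
          ≤ C' * (Real.exp (r * urnT c k m) * (1 + urnT c k m) ^ ν) * ‖v‖) →
      ∃ C1 : ℝ, 0 ≤ C1 ∧ ∀ n : ℕ, 2 ≤ n →
        eLpNorm (fun ω => X n ω - ∫ ω', X n ω' ∂μ) (ENNReal.ofReal p) μ
          ≤ ENNReal.ofReal ((1 + C1 * ((Real.log n ^ ν) ^ 2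
        * ∑ k ∈ Finset.range n, ((n : ℝ) / ((k : ℝ) + 1)) ^ (2 * (r / b)))) ^ (1 / 2 : ℝ)) := by
    intro r ν C' hr hC' hbd
    obtain ⟨C2, hC2, hmart⟩ := urn_mart p hp ℱ c L X (fun n => (hadp n).stronglyMeasurable) x₀ hX0
      hcond hmem K hK hD (LinearMap.ker ℓ) hW
      (fun k m => C' * (Real.exp (r * urnT c k m) * (1 + urnT c k m) ^ ν))
      (fun k m => by
        have := urnT_nonneg c hc k m
        positivity)
      (fun k m v hv => hbd k m v hv)
    obtain ⟨C3, hC3, hsum⟩ := urn_sum_phi w b hw₀ hb r hr ν C'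
    refine ⟨C2 * C3, by positivity, fun n hn => (hmart n).trans ?_⟩
    apply ENNReal.ofReal_le_ofReal
    have h0 : 0 ≤ ∑ k ∈ Finset.range n, (C' * (Real.exp (r * urnT c (k + 1) (n - (k + 1)))
        * (1 + urnT c (k + 1) (n - (k + 1))) ^ ν)) ^ 2 :=
      Finset.sum_nonneg fun k _ => sq_nonneg _
    apply Real.rpow_le_rpow (by positivity) _ (by norm_num)
    have h1 := mul_le_mul_of_nonneg_left (hsum n hn) hC2
    rw [← mul_assoc] at h1
    linarith
  rcases lt_trichotomy lam2.re (b / 2) with hlt | heq | hgt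
  · obtain ⟨r, hr1, hr2⟩ := exists_between (max_lt hlt (half_pos hb))
    have hr0 : 0 ≤ r := (le_max_right _ _).trans hr1.le
    have hr3 : 0 < r - lam2.re := by
      have := (le_max_left lam2.re 0).trans_lt hr1
      linarith
    obtain ⟨Cε, hCε, hε⟩ := urn_pow_le_exp (r - lam2.re) hr3 ν₂
    obtain ⟨C1, hC1, hbound⟩ := hmain r 0 (C0 * Cε + 1) hr0 (by positivity) (by
      intro k m v hv
      refine (hop k m v hv).trans ?_
      have hT := urnT_nonneg c hc k m
      have h1 := hε _ hT
      have h2 : Real.exp (lam2.re * urnT c k m) * Real.exp ((r - lam2.re) * urnT c k m)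
          = Real.exp (r * urnT c k m) := by
        rw [← Real.exp_add]; congr 1; ring
      refine mul_le_mul_of_nonneg_right ?_ (norm_nonneg v)
      calc C0 * (Real.exp (lam2.re * urnT c k m) * (1 + urnT c k m) ^ ν₂)
          ≤ C0 * (Real.exp (lam2.re * urnT c k m)
            * (Cε * Real.exp ((r - lam2.re) * urnT c k m))) := by gcongr
        _ = C0 * Cε * Real.exp (r * urnT c k m) := by rw [← h2]; ring
        _ ≤ (C0 * Cε + 1) * (Real.exp (r * urnT c k m) * (1 + urnT c k m) ^ 0) := by
          rw [pow_zero, mul_one]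
          gcongr
          linarith)
    have hs : 2 * (r / b) < 1 := by
      rw [← mul_div_assoc, div_lt_one hb]; linarith
    refine ⟨Real.sqrt (1 / 1 ^ 2 + C1 * (1 - 2 * (r / b))⁻¹), fun n hn =>
      ⟨fun _ => ?_, fun h => absurd h hlt.ne, fun h => absurd h hlt.not_gt⟩⟩
    refine (hbound n hn).trans (ENNReal.ofReal_le_ofReal ?_)
    have hn1 : (1 : ℝ) ≤ n := by exact_mod_cast (by omega : 1 ≤ n)
    apply urn_finish _ _ _ _ _ hC1 (inv_nonneg.2 (by linarith)) one_pos
    · exact Real.one_le_rpow hn1 (by norm_num)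
    · rw [pow_zero, one_pow, one_mul, ← Real.sqrt_eq_rpow, Real.sq_sqrt (by linarith)]
      exact urn_sum_lt _ hs (by positivity) n
  · obtain ⟨C1, hC1, hbound⟩ := hmain lam2.re ν₂ C0 (by linarith) hC0 hop
    have hs : 2 * (lam2.re / b) = 1 := by rw [heq]; field_simp
    rw [hs] at hbound
    refine ⟨Real.sqrt (1 / ((1 / 2 : ℝ) ^ ((ν₂ : ℝ) + 1 / 2)) ^ 2 + C1 * 3), fun n hn =>
      ⟨fun h => absurd heq h.ne, fun _ => ?_, fun h => absurd heq h.ne'⟩⟩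
    refine (hbound n hn).trans (ENNReal.ofReal_le_ofReal ?_)
    have hn1 : (1 : ℝ) ≤ n := by exact_mod_cast (by omega : 1 ≤ n)
    have hlog := urn_log_two_lt hn
    have hlog0 : 0 < Real.log n := by linarith
    rw [mul_assoc]
    apply urn_finish _ _ _ _ _ hC1 (by norm_num) (by positivity)
    · calc (1 / 2 : ℝ) ^ ((ν₂ : ℝ) + 1 / 2) ≤ Real.log n ^ ((ν₂ : ℝ) + 1 / 2) := by gcongr
        _ ≤ _ := le_mul_of_one_le_left (by positivity) (Real.one_le_rpow hn1 (by norm_num))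
    · have h1 : ((n : ℝ) ^ (1 / 2 : ℝ) * Real.log n ^ ((ν₂ : ℝ) + 1 / 2)) ^ 2
          = (Real.log n ^ ν₂) ^ 2 * (n * Real.log n) := by
        rw [Real.rpow_add hlog0, Real.rpow_natCast, mul_pow, mul_pow, ← Real.sqrt_eq_rpow,
          ← Real.sqrt_eq_rpow, Real.sq_sqrt (by linarith), Real.sq_sqrt hlog0.le]
        ring
      rw [h1]
      calc _ ≤ (Real.log n ^ ν₂) ^ 2 * (3 * (n * Real.log n)) := by
            gcongr
            exact urn_sum_eq n hn
        _ = _ := by ring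
  · obtain ⟨C1, hC1, hbound⟩ := hmain lam2.re ν₂ C0 (by linarith) hC0 hop
    have hs : 1 < 2 * (lam2.re / b) := by
      rw [← mul_div_assoc, one_lt_div hb]; linarith
    obtain ⟨C4, hC4, hsum⟩ := urn_sum_gt _ hs
    refine ⟨Real.sqrt (1 / ((1 / 2 : ℝ) ^ ν₂) ^ 2 + C1 * C4), fun n hn =>
      ⟨fun h => absurd h hgt.not_gt, fun h => absurd h hgt.ne', fun _ => ?_⟩⟩
    refine (hbound n hn).trans (ENNReal.ofReal_le_ofReal ?_)
    have hn1 : (1 : ℝ) ≤ n := by exact_mod_cast (by omega : 1 ≤ n)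
    have hlog := urn_log_two_lt hn
    have hlog0 : 0 < Real.log n := by linarith
    rw [mul_assoc]
    apply urn_finish _ _ _ _ _ hC1 hC4 (by positivity)
    · calc (1 / 2 : ℝ) ^ ν₂ ≤ Real.log n ^ ν₂ := by gcongr
        _ ≤ _ := le_mul_of_one_le_left (by positivity)
          (Real.one_le_rpow hn1 (div_nonneg (by linarith) hb.le))
    · have h1 : ((n : ℝ) ^ (lam2.re / b) * Real.log n ^ ν₂) ^ 2
          = (Real.log n ^ ν₂) ^ 2 * (n : ℝ) ^ (2 * (lam2.re / b)) := by
        rw [mul_pow, mul_comm 2 (lam2.re / b), Real.rpow_mul (by linarith), mul_comm]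
        norm_cast
      rw [h1]
      calc _ ≤ (Real.log n ^ ν₂) ^ 2 * (C4 * (n : ℝ) ^ (2 * (lam2.re / b))) := by
            gcongr
            exact hsum n
        _ = _ := by ring
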